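/- For every δ > 0 there exists a constant C < ∞ depending only on δ with the following property. Let T > 0, let u : B × [0,T) → (0,∞) be a smooth solution of ∂_t u = Δ log u with initial value u₀ := u(·,0), and let α ≥ 1 be such that the positive part (u₀ − α h̃)₊ is integrable on B. Then for every t ∈ [0, min{1,T}) with t ≥ (1+δ) · ‖(u₀ − α h̃)₊‖_{L¹(B)} / (4π), one has u(x,t) ≤ C α h̃(x) for all x ∈ B. -/

import Mathlib

open Real MeasureTheory Metric Set Filter Topology

/-- The Euclidean Laplacian of a function on `ℝ²`. -/
noncomputable def lap (f : EuclideanSpace ℝ (Fin 2) → ℝ) (x : EuclideanSpace ℝ (Fin 2)) : ℝ :=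
  iteratedFDeriv ℝ 2 f x ![EuclideanSpace.single 0 1, EuclideanSpace.single 0 1] +
  iteratedFDeriv ℝ 2 f x ![EuclideanSpace.single 1 1, EuclideanSpace.single 1 1]

/-- The conformal factor `h̃(x) = (2/(1-|x|²))²` of the Poincaré metric on the unit disc. -/
noncomputable def poincareH (x : EuclideanSpace ℝ (Fin 2)) : ℝ :=
  (2 / (1 - ‖x‖^2))^2


/-- The Euclidean plane. -/
abbrev E2 := EuclideanSpace ℝ (Fin 2)

/-- Standard basis vectors. -/
noncomputable abbrev ee (i : Fin 2) : E2 := EuclideanSpace.single i 1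

lemma lap_eq_sum' (f : E2 → ℝ) (x : E2) :
    lap f x = ∑ i : Fin 2, fderiv ℝ (fderiv ℝ f) x (ee i) (ee i) := by
  simp [lap, iteratedFDeriv_two_apply, Fin.sum_univ_two]

lemma fderiv_fderiv_apply {f : E2 → ℝ} {x : E2} (hf : ContDiffAt ℝ 2 f x) (v w : E2) :
    fderiv ℝ (fun y => fderiv ℝ f y v) x w = fderiv ℝ (fderiv ℝ f) x w v := by
  have h1 : DifferentiableAt ℝ (fderiv ℝ f) x :=
    (hf.fderiv_right (m := 1) (by norm_num)).differentiableAt (by norm_num)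
  have := (h1.hasFDerivAt.clm_apply (hasFDerivAt_const v x)).fderiv
  rw [this]
  simp

lemma lap_eq_sum {f : E2 → ℝ} {x : E2} (hf : ContDiffAt ℝ 2 f x) :
    lap f x = ∑ i : Fin 2, fderiv ℝ (fun y => fderiv ℝ f y (ee i)) x (ee i) := by
  rw [lap_eq_sum']
  exact Finset.sum_congr rfl fun i _ => (fderiv_fderiv_apply hf _ _).symm

lemma lap_congr {f g : E2 → ℝ} {x : E2} (h : f =ᶠ[𝓝 x] g) : lap f x = lap g x := by
  rw [lap_eq_sum', lap_eq_sum', h.fderiv.fderiv_eq]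

lemma lap_add {f g : E2 → ℝ} {x : E2} (hf : ContDiffAt ℝ 2 f x) (hg : ContDiffAt ℝ 2 g x) :
    lap (fun y => f y + g y) x = lap f x + lap g x := by
  have := iteratedFDeriv_add_apply hf hg
  simp only [lap]
  change iteratedFDeriv ℝ 2 (f + g) x _ + iteratedFDeriv ℝ 2 (f + g) x _ = _
  rw [this]; simp only [add_apply]; ring

lemma lap_const_mul {f : E2 → ℝ} {x : E2} (c : ℝ) (hf : ContDiffAt ℝ 2 f x) :
    lap (fun y => c * f y) x = c * lap f x := by
  have := iteratedFDeriv_const_smul_apply (𝕜 := ℝ) (a := c) hf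
  simp only [lap]
  change iteratedFDeriv ℝ 2 (c • f) x _ + iteratedFDeriv ℝ 2 (c • f) x _ = _
  rw [this]; simp only [smul_apply, smul_eq_mul]; ring

lemma lap_sub {f g : E2 → ℝ} {x : E2} (hf : ContDiffAt ℝ 2 f x) (hg : ContDiffAt ℝ 2 g x) :
    lap (fun y => f y - g y) x = lap f x - lap g x := by
  have h1 := lap_add hf (contDiffAt_const.mul hg (f := fun _ => (-1:ℝ)))
  rw [lap_const_mul _ hg] at h1
  simpa [sub_eq_add_neg] using h1

lemma lap_const (c : ℝ) (x : E2) : lap (fun _ => c) x = 0 := by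
  rw [lap_eq_sum']
  simp

/-- Chain rule for the Laplacian. -/
lemma lap_comp {φ : ℝ → ℝ} {dphi : ℝ → ℝ} {ddphi : ℝ} {f : E2 → ℝ} {x : E2}
    (hf : ContDiffAt ℝ 2 f x) (hφ : ContDiffAt ℝ 2 φ (f x))
    (h1 : ∀ᶠ s in 𝓝 (f x), HasDerivAt φ (dphi s) s) (h2 : HasDerivAt dphi ddphi (f x)) :
    lap (fun y => φ (f y)) x =
      dphi (f x) * lap f x + ddphi * ∑ i : Fin 2, (fderiv ℝ f x (ee i)) ^ 2 := by
  have hc : ContDiffAt ℝ 2 (fun y => φ (f y)) x := hφ.comp x hf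
  rw [lap_eq_sum hc, lap_eq_sum hf, Finset.mul_sum, Finset.mul_sum, ← Finset.sum_add_distrib]
  refine Finset.sum_congr rfl fun i _ => ?_
  have hfd : ∀ᶠ y in 𝓝 x, DifferentiableAt ℝ f y :=
    (hf.eventually (by simp)).mono fun y hy => hy.differentiableAt (by norm_num)
  have e1 : (fun y => fderiv ℝ (fun z => φ (f z)) y (ee i)) =ᶠ[𝓝 x]
      fun y => dphi (f y) * fderiv ℝ f y (ee i) := by
    filter_upwards [hfd, hf.continuousAt.eventually h1] with y hy1 hy2
    have h3 : HasFDerivAt (fun z => φ (f z)) (dphi (f y) • fderiv ℝ f y) y :=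
      hy2.comp_hasFDerivAt y hy1.hasFDerivAt
    rw [h3.fderiv]
    simp
  rw [e1.fderiv_eq]
  have d1 : HasFDerivAt (fun y => dphi (f y)) (ddphi • fderiv ℝ f x) x :=
    h2.comp_hasFDerivAt x (hf.differentiableAt (by norm_num)).hasFDerivAt
  have d2 : DifferentiableAt ℝ (fun y => fderiv ℝ f y (ee i)) x := by
    have h1 : DifferentiableAt ℝ (fderiv ℝ f) x :=
      (hf.fderiv_right (m := 1) (by norm_num)).differentiableAt (by norm_num)
    exact h1.clm_apply (differentiableAt_const _)
  have d3 : HasFDerivAt (fun y => dphi (f y) * fderiv ℝ f y (ee i)) _ x := d1.mul d2.hasFDerivAt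
  rw [d3.fderiv]
  simp
  ring

lemma fderiv_normsq (c x v : E2) :
    fderiv ℝ (fun y : E2 => ‖y - c‖ ^ 2) x v = 2 * inner ℝ (x - c) v := by
  have h : HasFDerivAt (fun y : E2 => y - c) (ContinuousLinearMap.id ℝ E2) x :=
    (hasFDerivAt_id x).sub_const c
  rw [h.norm_sq.fderiv]
  simp [inner_sub_left]

lemma contDiff_normsq (c : E2) {n : WithTop ℕ∞} : ContDiff ℝ n (fun y : E2 => ‖y - c‖ ^ 2) :=
  (contDiff_id.sub contDiff_const).norm_sq ℝ

lemma lap_normsq (c x : E2) : lap (fun y : E2 => ‖y - c‖ ^ 2) x = 4 := by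
  rw [lap_eq_sum (contDiff_normsq c).contDiffAt]
  have : ∀ i : Fin 2, fderiv ℝ (fun y => fderiv ℝ (fun y : E2 => ‖y - c‖ ^ 2) y (ee i)) x (ee i) = 2 := by
    intro i
    simp only [fderiv_normsq]
    have h : HasFDerivAt (fun y : E2 => 2 * inner ℝ (y - c) (ee i))
      ((2:ℝ) • innerSL ℝ (ee i)) x := by
      have h0 := ((innerSL ℝ (ee i)).hasFDerivAt (x := x - c)).comp x ((hasFDerivAt_id x).sub_const c)
      have h1 := h0.const_mul 2
      refine h1.congr_of_eventuallyEq (Eventually.of_forall fun y => ?_)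
      simp [real_inner_comm]
    rw [h.fderiv]
    simp [ee]
  simp [this]; norm_num

lemma sum_fderiv_normsq (c x : E2) :
    ∑ i : Fin 2, (fderiv ℝ (fun y : E2 => ‖y - c‖ ^ 2) x (ee i)) ^ 2 = 4 * ‖x - c‖ ^ 2 := by
  simp only [fderiv_normsq]
  rw [EuclideanSpace.norm_sq_eq]
  simp [ee, EuclideanSpace.inner_single_right, Fin.sum_univ_two]
  ring

/-- At an interior local maximum the Laplacian is nonpositive. -/
lemma lap_nonpos_of_isLocalMax {f : E2 → ℝ} {x : E2} (hf : ContDiffAt ℝ 2 f x)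
    (hm : IsLocalMax f x) : lap f x ≤ 0 := by
  rw [lap_eq_sum hf]
  refine Finset.sum_nonpos fun i _ => ?_
  by_contra hpos
  push Not at hpos
  set g : ℝ → ℝ := fun s => f (x + s • ee i) with hg
  have hline : ∀ s : ℝ, HasDerivAt (fun s : ℝ => x + s • ee i) (ee i) s := fun s => by
    simpa using ((hasDerivAt_id s).smul_const (ee i)).const_add x
  have hcont : ContinuousAt (fun s : ℝ => x + s • ee i) 0 := (hline 0).continuousAt
  have h0 : x + (0:ℝ) • ee i = x := by simp
  have ht : Tendsto (fun s : ℝ => x + s • ee i) (𝓝 0) (𝓝 x) := by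
    have := hcont.tendsto; rwa [h0] at this
  have hfd : ∀ᶠ y in 𝓝 x, DifferentiableAt ℝ f y :=
    (hf.eventually (by simp)).mono fun y hy => hy.differentiableAt (by norm_num)
  have hg1 : deriv g =ᶠ[𝓝 0] fun s => fderiv ℝ f (x + s • ee i) (ee i) := by
    filter_upwards [ht.eventually hfd] with s hs
    exact (hs.hasFDerivAt.comp_hasDerivAt s (hline s)).deriv
  have hg2 : deriv (deriv g) 0 = fderiv ℝ (fun y => fderiv ℝ f y (ee i)) x (ee i) := by
    rw [hg1.deriv_eq]
    have d2 : DifferentiableAt ℝ (fun y => fderiv ℝ f y (ee i)) x := by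
      have h1 : DifferentiableAt ℝ (fderiv ℝ f) x :=
        (hf.fderiv_right (m := 1) (by norm_num)).differentiableAt (by norm_num)
      exact h1.clm_apply (differentiableAt_const _)
    have := HasFDerivAt.comp_hasDerivAt (0:ℝ) (f := fun s : ℝ => x + s • ee i)
      (l := fun y => fderiv ℝ f y (ee i))
      (by rw [h0]; exact d2.hasFDerivAt) (hline 0)
    exact this.deriv
  have hgm : IsLocalMax g 0 := by
    have : ∀ᶠ s in 𝓝 (0:ℝ), f (x + s • ee i) ≤ f x := ht.eventually hm
    simpa [IsLocalMax, IsMaxFilter, hg] using this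
  have hgc : ContinuousAt g 0 := by
    have : ContinuousAt f (x + (0:ℝ) • ee i) := by rw [h0]; exact hf.continuousAt
    exact ContinuousAt.comp (f := fun s : ℝ => x + s • ee i) this hcont
  have hmin : IsLocalMin g 0 :=
    isLocalMin_of_deriv_deriv_pos (by rw [hg2]; exact hpos) hgm.deriv_eq_zero hgc
  have hconst : g =ᶠ[𝓝 0] fun _ => g 0 := by
    filter_upwards [hgm, hmin] with s h1 h2 using le_antisymm h1 h2
  have : deriv (deriv g) 0 = 0 := by
    have h3 : deriv g =ᶠ[𝓝 0] fun _ => (0:ℝ) := by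
      filter_upwards [hconst.eventuallyEq_nhds] with s hs
      rw [hs.deriv_eq]; simp
    rw [h3.deriv_eq]; simp
  rw [hg2] at this
  exact hpos.ne' this


lemma finrank_E2 : Module.finrank ℝ E2 = 2 := by simp

lemma abs_log_le_add_inv {s : ℝ} (hs : 0 < s) : |log s| ≤ s + s⁻¹ := by
  rw [abs_le]
  have h1 := Real.log_le_sub_one_of_pos hs
  have h2 := Real.one_sub_inv_le_log_of_pos hs
  have h3 := inv_pos.2 hs
  constructor <;> linarith

lemma locallyIntegrable_log_norm : LocallyIntegrable (fun y : E2 => log ‖y‖) := by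
  rw [locallyIntegrable_iff]
  intro K hK
  obtain ⟨R, hR_pos, hR⟩ := hK.isBounded.exists_pos_norm_lt
  refine IntegrableOn.mono_set (t := ball 0 R) ?_ (fun x hx => mem_ball_zero_iff.mpr (hR x hx))
  refine integrableOn_ball_of_norm_le_rpow (C := R ^ 2 + 1) (α := 1) (by simp) (by simp) ?_ ?_
  · filter_upwards [ae_restrict_mem measurableSet_ball] with x hx
    rw [mem_ball_zero_iff] at hx
    rw [Real.rpow_neg_one]
    rcases eq_or_ne x 0 with rfl | hx0
    · simp
    · have h0 : 0 < ‖x‖ := norm_pos_iff.2 hx0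
      refine (abs_log_le_add_inv h0).trans ?_
      have : (R ^ 2 + 1) * ‖x‖⁻¹ = R ^ 2 * ‖x‖⁻¹ + ‖x‖⁻¹ := by ring
      rw [this]
      gcongr
      rw [← div_eq_mul_inv, le_div_iff₀ h0]
      nlinarith
  · exact (Real.measurable_log.comp measurable_norm).aestronglyMeasurable

/-- Regularised logarithm. -/
noncomputable def regLog (c : ℝ) (y : E2) : ℝ := 1 / 2 * log (‖y‖ ^ 2 + (c ^ 2)⁻¹)

lemma contDiff_regLog {c : ℝ} (hc : 0 < c) {n : WithTop ℕ∞} : ContDiff ℝ n (regLog c) := by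
  unfold regLog
  refine contDiff_const.mul (ContDiff.log ((contDiff_id.norm_sq ℝ).add contDiff_const) ?_)
  intro x
  positivity

lemma lap_regLog {c : ℝ} (hc : 0 < c) (y : E2) :
    lap (regLog c) y = 2 * (c ^ 2)⁻¹ / (‖y‖ ^ 2 + (c ^ 2)⁻¹) ^ 2 := by
  have hp : ∀ s : ℝ, 0 ≤ s → s + (c ^ 2)⁻¹ ≠ 0 := fun s hs => by positivity
  have hpos : 0 < ‖y - 0‖ ^ 2 + (c ^ 2)⁻¹ := by positivity
  have hne := hpos.ne'
  have hd : ∀ s : ℝ, s + (c ^ 2)⁻¹ ≠ 0 →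
      HasDerivAt (fun s => 1 / 2 * log (s + (c ^ 2)⁻¹)) (1 / 2 * (1 / (s + (c ^ 2)⁻¹))) s := by
    intro s hs
    exact (((hasDerivAt_id s).add_const _).log hs).const_mul _
  have key := lap_comp (φ := fun s => 1 / 2 * log (s + (c ^ 2)⁻¹))
    (dphi := fun s => 1 / 2 * (1 / (s + (c ^ 2)⁻¹))) (ddphi := 1 / 2 * (-1 / (‖y - 0‖ ^ 2 + (c ^ 2)⁻¹) ^ 2))
    (f := fun y : E2 => ‖y - 0‖ ^ 2) (x := y) (contDiff_normsq 0).contDiffAt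
    (contDiffAt_const.mul ((contDiffAt_id.add contDiffAt_const).log hne)) ?_ ?_
  · rw [lap_normsq, sum_fderiv_normsq] at key
    simp only [sub_zero] at key hpos hne
    have e : regLog c = fun y : E2 => 1 / 2 * log (‖y‖ ^ 2 + (c ^ 2)⁻¹) := rfl
    rw [e, key]
    field_simp
    ring
  · have : ∀ᶠ s in 𝓝 (‖y - 0‖ ^ 2), s + (c ^ 2)⁻¹ ≠ 0 :=
      (continuousAt_id.add continuousAt_const).eventually_ne hne
    exact this.mono fun s hs => hd s hs
  · have h2 := (((hasDerivAt_id (‖y - 0‖ ^ 2)).add_const (c ^ 2)⁻¹).inv hne).const_mul (1/2 : ℝ)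
    simpa [one_div] using h2

lemma HasCompactSupport.fderiv_app {g : E2 → ℝ} (hc : HasCompactSupport g) (v : E2) :
    HasCompactSupport (fun y => fderiv ℝ g y v) :=
  hc.fderiv_apply ℝ v

lemma continuous_fderiv_app {g : E2 → ℝ} (hg : ContDiff ℝ 2 g) (v : E2) :
    ContDiff ℝ 1 (fun y => fderiv ℝ g y v) :=
  (hg.fderiv_right (m := 1) (by norm_num)).clm_apply contDiff_const

lemma continuous_lap {g : E2 → ℝ} (hg : ContDiff ℝ 2 g) : Continuous (lap g) := by
  have : lap g = fun x => ∑ i : Fin 2, fderiv ℝ (fun y => fderiv ℝ g y (ee i)) x (ee i) := by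
    ext x; exact lap_eq_sum hg.contDiffAt
  rw [this]
  refine continuous_finsetSum _ fun i _ => ?_
  exact ((continuous_fderiv_app hg (ee i)).continuous_fderiv (by norm_num)).clm_apply continuous_const

lemma hasCompactSupport_lap {g : E2 → ℝ} (hc : HasCompactSupport g) :
    HasCompactSupport (lap g) := by
  refine hc.mono' ?_
  intro x hx
  by_contra h
  apply hx
  have : g =ᶠ[𝓝 x] fun _ => 0 := by
    have := notMem_tsupport_iff_eventuallyEq.1 h
    exact this
  rw [lap_congr this, lap_const]

/-- Green's identity. -/
lemma integral_mul_lap {k g : E2 → ℝ} (hk : ContDiff ℝ 2 k) (hg : ContDiff ℝ 2 g)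
    (hc : HasCompactSupport g) : ∫ y, k y * lap g y = ∫ y, lap k y * g y := by
  have hk1 := fun v => continuous_fderiv_app hk v
  have hg1 := fun v => continuous_fderiv_app hg v
  have hkc := hk.continuous
  have hgc := hg.continuous
  have hk2 : ∀ v w, Continuous (fun x => fderiv ℝ (fun y => fderiv ℝ k y v) x w) := fun v w =>
    ((hk1 v).continuous_fderiv (by norm_num)).clm_apply continuous_const
  have hg2 : ∀ v w, Continuous (fun x => fderiv ℝ (fun y => fderiv ℝ g y v) x w) := fun v w =>
    ((hg1 v).continuous_fderiv (by norm_num)).clm_apply continuous_const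
  have hgc1 : ∀ v, HasCompactSupport (fun y => fderiv ℝ g y v) := fun v => hc.fderiv_app v
  have hgc2 : ∀ v w, HasCompactSupport (fun x => fderiv ℝ (fun y => fderiv ℝ g y v) x w) :=
    fun v w => (hgc1 v).fderiv_app w
  have I1 : ∀ i, Integrable (fun y => k y * fderiv ℝ (fun y => fderiv ℝ g y (ee i)) y (ee i)) :=
    fun i => (hkc.mul (hg2 _ _)).integrable_of_hasCompactSupport (hgc2 _ _).mul_left
  have I2 : ∀ i, Integrable (fun y => fderiv ℝ (fun y => fderiv ℝ k y (ee i)) y (ee i) * g y) :=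
    fun i => ((hk2 _ _).mul hgc).integrable_of_hasCompactSupport hc.mul_left
  have I3 : ∀ i, Integrable (fun y => fderiv ℝ k y (ee i) * fderiv ℝ g y (ee i)) :=
    fun i => ((hk1 _).continuous.mul (hg1 _).continuous).integrable_of_hasCompactSupport
      (hgc1 _).mul_left
  simp only [lap_eq_sum hk.contDiffAt, lap_eq_sum hg.contDiffAt, Finset.mul_sum, Finset.sum_mul]
  rw [integral_finsetSum _ fun i _ => I1 i, integral_finsetSum _ fun i _ => I2 i]
  refine Finset.sum_congr rfl fun i _ => ?_
  rw [integral_mul_fderiv_eq_neg_fderiv_mul_of_integrable (I3 i) (I1 i)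
    ((hkc.mul (hg1 _).continuous).integrable_of_hasCompactSupport (hgc1 _).mul_left)
    (fun x _ => hk.differentiable (by norm_num) x)
    (fun x _ => (hg1 _).differentiable (by norm_num) x)]
  rw [integral_mul_fderiv_eq_neg_fderiv_mul_of_integrable (I2 i) (I3 i)
    (((hk1 _).continuous.mul hgc).integrable_of_hasCompactSupport hc.mul_left)
    (fun x _ => (hk1 _).differentiable (by norm_num) x)
    (fun x _ => hg.differentiable (by norm_num) x)]
  simp

lemma integral_peak : ∫ z : E2, (π⁻¹ * ((‖z‖ ^ 2 + 1) ^ 2)⁻¹) = 1 := by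
  have h := integral_fun_norm_addHaar (volume : Measure E2) (fun r : ℝ => π⁻¹ * ((r ^ 2 + 1) ^ 2)⁻¹)
  rw [h, finrank_E2]
  have hv : (volume : Measure E2).real (ball 0 1) = π := by
    simp [Measure.real, pi_pos.le]
  rw [hv]
  have hder : ∀ r ∈ Ici (0:ℝ), HasDerivAt (fun r : ℝ => - (2 * π)⁻¹ * (r ^ 2 + 1)⁻¹)
      (r ^ (2 - 1) • (π⁻¹ * ((r ^ 2 + 1) ^ 2)⁻¹)) r := by
    intro r _
    have h1 : HasDerivAt (fun r : ℝ => r ^ 2 + 1) (2 * r) r := by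
      simpa using (hasDerivAt_pow 2 r).add_const 1
    have h2 := (h1.inv (by positivity)).const_mul (- (2 * π)⁻¹)
    refine h2.congr_deriv ?_
    have := pi_pos
    simp
    field_simp
  have hlim : Tendsto (fun r : ℝ => - (2 * π)⁻¹ * (r ^ 2 + 1)⁻¹) atTop (𝓝 0) := by
    have : Tendsto (fun r : ℝ => r ^ 2 + 1) atTop atTop :=
      tendsto_atTop_add_const_right _ _ (tendsto_pow_atTop (by norm_num))
    simpa using (tendsto_inv_atTop_zero.comp this).const_mul (- (2 * π)⁻¹)
  rw [integral_Ioi_of_hasDerivAt_of_nonneg' hder ?_ hlim]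
  · have := pi_pos
    simp
  · intro r hr
    have := pi_pos
    have : (0:ℝ) < r := hr
    simp only [smul_eq_mul]
    positivity

/-- `log‖·‖ / 2π` is the fundamental solution of the Laplacian. -/
lemma integral_log_lap_zero {g : E2 → ℝ} (hg : ContDiff ℝ 2 g) (hc : HasCompactSupport g) :
    ∫ y, log ‖y‖ * lap g y = 2 * π * g 0 := by
  have L1 : Tendsto (fun c : ℝ => ∫ y, regLog c y * lap g y) atTop (𝓝 (2 * π * g 0)) := by
    have hpk := tendsto_integral_comp_smul_smul_of_integrable (μ := (volume : Measure E2))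
      (φ := fun z : E2 => π⁻¹ * ((‖z‖ ^ 2 + 1) ^ 2)⁻¹) (fun x => by have := pi_pos; positivity)
      integral_peak ?_ (hg.continuous.integrable_of_hasCompactSupport hc) hg.continuous.continuousAt
    · refine (hpk.const_mul (2 * π)).congr' ?_
      filter_upwards [eventually_gt_atTop 0] with c hcpos
      rw [integral_mul_lap (contDiff_regLog hcpos) hg hc, ← integral_const_mul]
      refine integral_congr_ae (Eventually.of_forall fun y => ?_)
      simp only [lap_regLog hcpos, finrank_E2, norm_smul, smul_eq_mul, Real.norm_eq_abs,
        abs_of_pos hcpos]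
      have := pi_pos
      field_simp
    · rw [finrank_E2]
      have ht : Tendsto (fun r : ℝ => π⁻¹ * (r ^ 2 + 1)⁻¹) atTop (𝓝 0) := by
        have : Tendsto (fun r : ℝ => r ^ 2 + 1) atTop atTop :=
          tendsto_atTop_add_const_right _ _ (tendsto_pow_atTop (by norm_num))
        simpa using (tendsto_inv_atTop_zero.comp this).const_mul (π⁻¹)
      have ht2 := ht.comp (tendsto_norm_cobounded_atTop (E := E2))
      refine squeeze_zero (fun x => by have := pi_pos; positivity) (fun x => ?_) ht2
      have := pi_pos
      simp only [Function.comp]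
      have h1 : ‖x‖ ^ 2 * (π⁻¹ * ((‖x‖ ^ 2 + 1) ^ 2)⁻¹) = (π⁻¹ * (‖x‖ ^ 2 + 1)⁻¹) * (‖x‖ ^ 2 / (‖x‖ ^ 2 + 1)) := by
        field_simp
      rw [h1]
      refine mul_le_of_le_one_right (by positivity) ?_
      rw [div_le_one (by positivity)]
      linarith
  have hlapc := continuous_lap hg
  have hlaps := hasCompactSupport_lap hc
  have L2 : Tendsto (fun c : ℝ => ∫ y, regLog c y * lap g y) atTop (𝓝 (∫ y, log ‖y‖ * lap g y)) := by
    refine tendsto_integral_filter_of_dominated_convergence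
      (fun y => (|log ‖y‖| + |regLog 1 y|) * |lap g y|) ?_ ?_ ?_ ?_
    · filter_upwards [eventually_gt_atTop 0] with c hcpos
      exact ((contDiff_regLog hcpos (n := 0)).continuous.mul hlapc).aestronglyMeasurable
    · filter_upwards [eventually_ge_atTop 1] with c hc1
      have h0 : ∀ᵐ y : E2, y ≠ 0 := by
        simp [ae_iff]
      filter_upwards [h0] with y hy
      rw [norm_mul, Real.norm_eq_abs, Real.norm_eq_abs]
      gcongr
      have hn : 0 < ‖y‖ := norm_pos_iff.2 hy
      have hcp : 0 < c := by linarith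
      have e1 : log ‖y‖ ≤ regLog c y := by
        have : log ‖y‖ = 1 / 2 * log (‖y‖ ^ 2) := by rw [Real.log_pow]; push_cast; ring
        rw [this, regLog]
        gcongr
        simp
        positivity
      have e2 : regLog c y ≤ regLog 1 y := by
        rw [regLog, regLog]
        gcongr
      rw [abs_le]
      constructor
      · have := neg_abs_le (log ‖y‖); have := abs_nonneg (regLog 1 y); linarith
      · have := le_abs_self (regLog 1 y); have := abs_nonneg (log ‖y‖); linarith
    · have a1 : Integrable (fun y => log ‖y‖ * lap g y) :=
        locallyIntegrable_log_norm.integrable_smul_right_of_hasCompactSupport hlapc hlaps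
      have a2 : Integrable (fun y => regLog 1 y * lap g y) :=
        ((contDiff_regLog one_pos (n := 0)).continuous.mul hlapc).integrable_of_hasCompactSupport
          hlaps.mul_left
      refine (a1.abs.add a2.abs).congr (Eventually.of_forall fun y => ?_)
      simp [abs_mul]; ring
    · have h0 : ∀ᵐ y : E2, y ≠ 0 := by simp [ae_iff]
      filter_upwards [h0] with y hy
      have hn : 0 < ‖y‖ := norm_pos_iff.2 hy
      refine Tendsto.mul_const _ ?_
      have : Tendsto (fun c : ℝ => ‖y‖ ^ 2 + (c ^ 2)⁻¹) atTop (𝓝 (‖y‖ ^ 2 + 0)) :=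
        tendsto_const_nhds.add (tendsto_inv_atTop_zero.comp (tendsto_pow_atTop (by norm_num)))
      have h3 := (this.log (by positivity)).const_mul (1/2)
      have : log ‖y‖ = 1 / 2 * log (‖y‖ ^ 2 + 0) := by
        rw [add_zero, Real.log_pow]; push_cast; ring
      rw [this]
      exact h3
  exact tendsto_nhds_unique L2 L1

lemma integral_lap_zero {g : E2 → ℝ} (hg : ContDiff ℝ 2 g) (hc : HasCompactSupport g) :
    ∫ y, lap g y = 0 := by
  have := integral_mul_lap (k := fun _ => 1) contDiff_const hg hc
  simpa [lap_const] using this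

/-- Logarithmic kernel. -/
noncomputable def logK (R : ℝ) (z : E2) : ℝ := (2 * π)⁻¹ * (log (2 * R) - log ‖z‖)

lemma locallyIntegrable_logK (R : ℝ) : LocallyIntegrable (logK R) := by
  have h := ((locallyIntegrable_const (log (2 * R))).sub locallyIntegrable_log_norm).smul (2 * π)⁻¹
    (μ := (volume : Measure E2))
  exact h

lemma integral_logK_lap {g : E2 → ℝ} (R : ℝ) (hg : ContDiff ℝ 2 g) (hc : HasCompactSupport g)
    (x : E2) : ∫ z, logK R z * lap g (x - z) = - g x := by
  set G : E2 → ℝ := fun z => g (x + z) with hG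
  have hGc : ContDiff ℝ 2 G := hg.comp (contDiff_const.add contDiff_id)
  have hGs : HasCompactSupport G := hc.comp_homeomorph (Homeomorph.addLeft x)
  have hl : ∀ z, lap G z = lap g (x + z) := by
    intro z
    simp only [lap, hG, iteratedFDeriv_comp_add_left' 2 x]
  have h1 := integral_log_lap_zero hGc hGs
  have h2 := integral_lap_zero hGc hGs
  have e : ∫ z, logK R z * lap g (x - z) = ∫ z, logK R z * lap G z := by
    rw [← integral_neg_eq_self]
    refine integral_congr_ae (Eventually.of_forall fun y => ?_)
    simp [logK, hl]
  rw [e]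
  have a1 : Integrable (fun y => log ‖y‖ * lap G y) :=
    locallyIntegrable_log_norm.integrable_smul_right_of_hasCompactSupport (continuous_lap hGc)
      (hasCompactSupport_lap hGs)
  have a2 : Integrable (lap G) :=
    (continuous_lap hGc).integrable_of_hasCompactSupport (hasCompactSupport_lap hGs)
  have e2 : ∀ z, logK R z * lap G z =
      (2 * π)⁻¹ * log (2 * R) * lap G z - (2 * π)⁻¹ * (log ‖z‖ * lap G z) := by
    intro z; simp only [logK]; ring
  simp only [e2]
  rw [integral_sub (a2.const_mul _) (a1.const_mul _), integral_const_mul, integral_const_mul, h1, h2]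
  have := pi_pos
  simp [hG]
  field_simp


/-- Logarithmic potential. -/
noncomputable def pot (R : ℝ) (g : E2 → ℝ) (x : E2) : ℝ := ∫ z, logK R z * g (x - z)

lemma pot_eq_conv (R : ℝ) (g : E2 → ℝ) :
    pot R g = convolution (logK R) g (ContinuousLinearMap.mul ℝ ℝ) volume := by
  ext x; simp [pot, convolution]

lemma contDiff_pot (R : ℝ) {g : E2 → ℝ} (hg : ContDiff ℝ 2 g) (hc : HasCompactSupport g) :
    ContDiff ℝ 2 (pot R g) := by
  rw [pot_eq_conv]
  exact hc.contDiff_convolution_right (n := 2) _ (locallyIntegrable_logK R) hg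

lemma fderiv_pot (R : ℝ) {g : E2 → ℝ} (hg : ContDiff ℝ 1 g) (hc : HasCompactSupport g) (x v : E2) :
    fderiv ℝ (pot R g) x v = pot R (fun y => fderiv ℝ g y v) x := by
  rw [pot_eq_conv, pot_eq_conv]
  rw [(hc.hasFDerivAt_convolution_right _ (locallyIntegrable_logK R) hg x).fderiv]
  rw [convolution_precompR_apply _ (locallyIntegrable_logK R) (hc.fderiv ℝ)
    (hg.continuous_fderiv (by norm_num))]

lemma integrable_logK_mul (R : ℝ) {g : E2 → ℝ} (hg : Continuous g) (hc : HasCompactSupport g)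
    (x : E2) : Integrable (fun z => logK R z * g (x - z)) := by
  have h1 : Continuous (fun z => g (x - z)) := hg.comp (continuous_const.sub continuous_id)
  have h2 : HasCompactSupport (fun z => g (x - z)) := hc.comp_homeomorph (Homeomorph.subLeft x)
  exact (locallyIntegrable_logK R).integrable_smul_right_of_hasCompactSupport h1 h2

lemma lap_pot (R : ℝ) {g : E2 → ℝ} (hg : ContDiff ℝ 2 g) (hc : HasCompactSupport g) (x : E2) :
    lap (pot R g) x = - g x := by
  rw [lap_eq_sum (contDiff_pot R hg hc).contDiffAt]
  have h1 : ∀ i, fderiv ℝ (fun y => fderiv ℝ (pot R g) y (ee i)) x (ee i) =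
      pot R (fun z => fderiv ℝ (fun y => fderiv ℝ g y (ee i)) z (ee i)) x := by
    intro i
    have : (fun y => fderiv ℝ (pot R g) y (ee i)) = pot R (fun y => fderiv ℝ g y (ee i)) := by
      ext y; exact fderiv_pot R (hg.of_le (by norm_num)) hc y _
    rw [this]
    exact fderiv_pot R (continuous_fderiv_app hg _) (hc.fderiv_app _) x _
  simp only [h1]
  rw [← integral_logK_lap R hg hc x]
  simp only [pot]
  rw [← integral_finsetSum]
  · refine integral_congr_ae (Eventually.of_forall fun z => ?_)
    simp only [lap_eq_sum hg.contDiffAt, Finset.mul_sum]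
  · intro i _
    exact integrable_logK_mul R (((continuous_fderiv_app hg (ee i)).continuous_fderiv
      (by norm_num)).clm_apply continuous_const) ((hc.fderiv_app _).fderiv_app _) x

lemma logK_nonneg {R : ℝ} {z : E2} (hz0 : z ≠ 0) (hz : ‖z‖ ≤ 2 * R) : 0 ≤ logK R z := by
  have := pi_pos
  have := Real.log_le_log (norm_pos_iff.2 hz0) hz
  unfold logK
  have : 0 ≤ log (2 * R) - log ‖z‖ := by linarith
  positivity

lemma ae_ne_zero_E2 : ∀ᵐ y : E2, y ≠ 0 := by simp [ae_iff]

lemma norm_le_two_of_mem {R : ℝ} {x0 x z : E2} (hx : x ∈ closedBall x0 R)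
    (hz : x - z ∈ closedBall x0 R) : ‖z‖ ≤ 2 * R := by
  rw [mem_closedBall, dist_eq_norm] at *
  have : z = (x - x0) - (x - z - x0) := by abel
  rw [this]
  exact (norm_sub_le _ _).trans (by linarith)

lemma hasCompactSupport_of_closedBall {g : E2 → ℝ} {x0 : E2} {R : ℝ}
    (h : ∀ x, x ∉ closedBall x0 R → g x = 0) : HasCompactSupport g :=
  HasCompactSupport.intro (isCompact_closedBall x0 R) h

/-- Time derivative of the potential. -/
lemma hasDerivAt_pot {R a c : ℝ} {x0 : E2} {W : ℝ → E2 → ℝ}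
    (hWs : ContDiffOn ℝ 2 (fun p : ℝ × E2 => W p.1 p.2) (Ioo a c ×ˢ univ))
    (hWsupp : ∀ t ∈ Ioo a c, ∀ x, x ∉ closedBall x0 R → W t x = 0)
    {t : ℝ} (ht : t ∈ Ioo a c) (x : E2) :
    HasDerivAt (fun s => pot R (W s) x) (pot R (fun y => deriv (fun s => W s y) t) x) t ∧
    Integrable (fun z => logK R z * deriv (fun s => W s (x - z)) t) := by
  have hopen : IsOpen (Ioo a c ×ˢ (univ : Set E2)) := isOpen_Ioo.prod isOpen_univ
  have hF := hasFDerivAt_convolution_right_with_param (μ := (volume : Measure E2))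
    (ContinuousLinearMap.mul ℝ ℝ) (g := W) (f := logK R)
    isOpen_Ioo (isCompact_closedBall x0 R) (fun p x hp hx => hWsupp p hp x hx)
    (locallyIntegrable_logK R) (hWs.of_le (by norm_num)) (t, x) ht
  have hdiff : ∀ y, HasFDerivAt (fun p : ℝ × E2 => W p.1 p.2)
      (fderiv ℝ (fun p : ℝ × E2 => W p.1 p.2) (t, y)) (t, y) := fun y =>
    ((hWs.contDiffAt (hopen.mem_nhds (by simpa using ht))).differentiableAt (by norm_num)).hasFDerivAt
  have hpair : ∀ y : E2, HasDerivAt (fun s : ℝ => (s, y)) ((1:ℝ), (0:E2)) t := fun y =>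
    (hasDerivAt_id t).prodMk (hasDerivAt_const t y)
  have hd : ∀ y, deriv (fun s => W s y) t = fderiv ℝ (fun p : ℝ × E2 => W p.1 p.2) (t, y) (1, 0) :=
    fun y => (HasFDerivAt.comp_hasDerivAt (l := fun p : ℝ × E2 => W p.1 p.2)
      (f := fun s : ℝ => (s, y)) t (hdiff y) (hpair y)).deriv
  have hcont : Continuous (fun y => fderiv ℝ (fun p : ℝ × E2 => W p.1 p.2) (t, y)) := by
    have := (hWs.fderiv_of_isOpen hopen (m := 1) (by norm_num)).continuousOn
    exact this.comp_continuous (by fun_prop) (fun y => by simpa using ht)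
  have hsupp : HasCompactSupport (fun y => fderiv ℝ (fun p : ℝ × E2 => W p.1 p.2) (t, y)) := by
    refine HasCompactSupport.intro (isCompact_closedBall x0 R) fun y hy => ?_
    have : (fun p : ℝ × E2 => W p.1 p.2) =ᶠ[𝓝 (t, y)] fun _ => 0 := by
      have hn : Ioo a c ×ˢ (closedBall x0 R)ᶜ ∈ 𝓝 (t, y) :=
        (isOpen_Ioo.prod isClosed_closedBall.isOpen_compl).mem_nhds ⟨ht, hy⟩
      filter_upwards [hn] with p hp using hWsupp p.1 hp.1 p.2 hp.2
    rw [this.fderiv_eq]; simp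
  constructor
  · have h2 := hF.comp_hasDerivAt t (hpair x)
    have h3 : (fun s => pot R (W s) x) = (fun q : ℝ × E2 =>
      (convolution (logK R) (W q.1) (ContinuousLinearMap.mul ℝ ℝ) volume) q.2) ∘ fun s : ℝ => (s, x) := by
      ext s; simp [pot_eq_conv]
    rw [h3]
    refine h2.congr_deriv ?_
    have h4 := convolution_precompR_apply (μ := (volume : Measure E2)) (ContinuousLinearMap.mul ℝ ℝ)
      (locallyIntegrable_logK R) hsupp hcont x ((1:ℝ), (0:E2))
    rw [pot_eq_conv]
    simp only [hd]
    exact h4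
  · simp only [hd]
    exact integrable_logK_mul R (hcont.clm_apply continuous_const)
      (hsupp.comp_left (g := fun l : (ℝ × E2) →L[ℝ] ℝ => l (1, 0)) (by simp)) x

lemma maxPrinciple {R a b c : ℝ} {x0 : E2} (hab : a < b) (hbc : b < c)
    {L W : ℝ → E2 → ℝ}
    (hLs : ContDiffOn ℝ 2 (fun p : ℝ × E2 => L p.1 p.2) (Ioo a c ×ˢ univ))
    (hWs : ContDiffOn ℝ 2 (fun p : ℝ × E2 => W p.1 p.2) (Ioo a c ×ˢ univ))
    (hLc : ContinuousOn (fun p : ℝ × E2 => L p.1 p.2) (Icc a b ×ˢ univ))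
    (hWc : ContinuousOn (fun p : ℝ × E2 => W p.1 p.2) (Icc a b ×ˢ univ))
    (hWa : ContDiff ℝ 2 (W a))
    (hLsupp : ∀ t ∈ Ico a c, ∀ x, x ∉ closedBall x0 R → L t x = 0)
    (hWsupp : ∀ t ∈ Ico a c, ∀ x, x ∉ closedBall x0 R → W t x = 0)
    (hW0 : ∀ t ∈ Ico a c, ∀ x, 0 ≤ W t x)
    (h5 : ∀ t ∈ Ioo a c, ∀ x, deriv (fun s => W s x) t ≤ lap (L t) x)
    (h7 : ∀ t ∈ Ioo a c, ∀ x, 1 ≤ (t - a) * deriv (fun s => L s x) t →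
      x ∈ ball x0 R ∧ W t x < (t - a) * lap (L t) x)
    {x : E2} (hx : x ∈ closedBall x0 R) :
    (b - a) * L b x ≤ pot R (W a) x + (b - a) := by
  have hIoo : ∀ t, t ∈ Ioo a c → t ∈ Ico a c := fun t ht => ⟨ht.1.le, ht.2⟩
  have hopen : IsOpen (Ioo a c ×ˢ (univ : Set E2)) := isOpen_Ioo.prod isOpen_univ
  have hslice : ∀ {F : ℝ → E2 → ℝ}, ContDiffOn ℝ 2 (fun p : ℝ × E2 => F p.1 p.2) (Ioo a c ×ˢ univ) →
      ∀ t ∈ Ioo a c, ContDiff ℝ 2 (F t) := by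
    intro F hF t ht
    have := hF.comp (t := Ioo a c ×ˢ univ) (s := univ) (f := fun y : E2 => (t, y))
      (by fun_prop) (fun y _ => by simpa using ht)
    rw [← contDiffOn_univ]
    exact this
  have htime : ∀ {F : ℝ → E2 → ℝ}, ContDiffOn ℝ 2 (fun p : ℝ × E2 => F p.1 p.2) (Ioo a c ×ˢ univ) →
      ∀ t ∈ Ioo a c, ∀ y, DifferentiableAt ℝ (fun s => F s y) t := by
    intro F hF t ht y
    have h1 : DifferentiableAt ℝ (fun p : ℝ × E2 => F p.1 p.2) (t, y) :=
      (hF.contDiffAt (hopen.mem_nhds (by simpa using ht))).differentiableAt (by norm_num)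
    exact h1.comp t (f := fun s : ℝ => (s, y)) (by fun_prop)
  have hWcs : ∀ t ∈ Ico a c, HasCompactSupport (W t) := fun t ht =>
    hasCompactSupport_of_closedBall (hWsupp t ht)
  have hLcs : ∀ t ∈ Ico a c, HasCompactSupport (L t) := fun t ht =>
    hasCompactSupport_of_closedBall (hLsupp t ht)
  -- the time derivative of the potential
  have hPt : ∀ t ∈ Ioo a c, ∀ y ∈ closedBall x0 R,
      pot R (fun w => deriv (fun s => W s w) t) y ≤ - L t y := by
    intro t ht y hy
    rw [← integral_logK_lap R (hslice hLs t ht) (hLcs t (hIoo t ht)) y]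
    unfold pot
    refine integral_mono_ae (hasDerivAt_pot hWs (fun t ht => hWsupp t (hIoo t ht)) ht y).2
      (integrable_logK_mul R (continuous_lap (hslice hLs t ht))
        (hasCompactSupport_lap (hLcs t (hIoo t ht))) y) ?_
    filter_upwards [ae_ne_zero_E2] with z hz
    by_cases hyz : y - z ∈ closedBall x0 R
    · exact mul_le_mul_of_nonneg_left (h5 t ht _) (logK_nonneg hz (norm_le_two_of_mem hy hyz))
    · have e1 : deriv (fun s => W s (y - z)) t = 0 := by
        have : (fun s => W s (y - z)) =ᶠ[𝓝 t] fun _ => 0 := by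
          filter_upwards [isOpen_Ioo.mem_nhds ht] with s hs using hWsupp s (hIoo s hs) _ hyz
        rw [this.deriv_eq]; simp
      have e2 : lap (L t) (y - z) = 0 := by
        have : L t =ᶠ[𝓝 (y - z)] fun _ => 0 := by
          filter_upwards [isClosed_closedBall.isOpen_compl.mem_nhds hyz] with w hw
            using hLsupp t (hIoo t ht) _ hw
        rw [lap_congr this, lap_const]
      simp only [e1, e2]; exact le_rfl
  have hPnn : ∀ t ∈ Ico a c, ∀ y ∈ closedBall x0 R, 0 ≤ pot R (W t) y := by
    intro t ht y hy
    refine integral_nonneg_of_ae ?_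
    filter_upwards [ae_ne_zero_E2] with z hz
    by_cases hyz : y - z ∈ closedBall x0 R
    · exact mul_nonneg (logK_nonneg hz (norm_le_two_of_mem hy hyz)) (hW0 t ht _)
    · simp [hWsupp t ht _ hyz]
  -- the quantity to be maximised
  set Q : ℝ × E2 → ℝ := fun p =>
    (p.1 - a) * L p.1 p.2 + pot R (W p.1) p.2 - pot R (W a) p.2 - (p.1 - a) with hQ
  have hK : IsCompact (Icc a b ×ˢ closedBall x0 R) := isCompact_Icc.prod (isCompact_closedBall x0 R)
  have hpotc : ContinuousOn (fun p : ℝ × E2 => pot R (W p.1) p.2) (Icc a b ×ˢ univ) := by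
    have := continuousOn_convolution_right_with_param (μ := (volume : Measure E2))
      (ContinuousLinearMap.mul ℝ ℝ) (g := W) (f := logK R) (s := Icc a b)
      (isCompact_closedBall x0 R) (fun p x hp hx => hWsupp p ⟨hp.1, hp.2.trans_lt hbc⟩ x hx)
      (locallyIntegrable_logK R) hWc
    simp only [pot_eq_conv]
    exact this
  have hac : a ∈ Ico a c := ⟨le_rfl, hab.trans hbc⟩
  have hpa : ContDiff ℝ 2 (pot R (W a)) := contDiff_pot R hWa (hWcs a hac)
  have hQc : ContinuousOn Q (Icc a b ×ˢ closedBall x0 R) := by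
    have : ContinuousOn Q (Icc a b ×ˢ univ) := by
      refine (((ContinuousOn.mul (by fun_prop) hLc).add hpotc).sub ?_).sub (by fun_prop)
      exact (hpa.continuous.comp continuous_snd).continuousOn
    exact this.mono (prod_mono_right (subset_univ _))
  obtain ⟨⟨t, y⟩, ⟨ht, hy⟩, hmax⟩ := hK.exists_isMaxOn ⟨(b, x), ⟨right_mem_Icc.2 hab.le, hx⟩⟩ hQc
  have hbx : Q (b, x) ≤ Q (t, y) := hmax (show (b, x) ∈ _ from ⟨right_mem_Icc.2 hab.le, hx⟩)
  suffices hle : Q (t, y) ≤ 0 by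
    have h1 := hPnn b ⟨hab.le, hbc⟩ x hx
    have h2 : Q (b, x) ≤ 0 := hbx.trans hle
    simp only [hQ] at h2
    linarith
  rcases ht.1.eq_or_lt with hta | hta
  · subst hta; simp [hQ]
  exfalso
  have htc : t ∈ Ioo a c := ⟨hta, ht.2.trans_lt hbc⟩
  -- time derivative at the maximum
  have hP := (hasDerivAt_pot hWs (fun t ht => hWsupp t (hIoo t ht)) htc y).1
  have hLd := (htime hLs t htc y).hasDerivAt
  have hQd : HasDerivAt (fun s => Q (s, y))
      ((1 * L t y + (t - a) * deriv (fun s => L s y) t) +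
        pot R (fun w => deriv (fun s => W s w) t) y - 0 - 1) t := by
    have h1 := (((hasDerivAt_id t).sub_const a).mul hLd)
    exact ((h1.add hP).sub (hasDerivAt_const t (pot R (W a) y))).sub ((hasDerivAt_id t).sub_const a)
  have hQge : 0 ≤ (1 * L t y + (t - a) * deriv (fun s => L s y) t) +
        pot R (fun w => deriv (fun s => W s w) t) y - 0 - 1 := by
    have hs := hQd.hasDerivWithinAt (s := Iio t)
    rw [hasDerivWithinAt_iff_tendsto_slope' (by simp)] at hs
    refine ge_of_tendsto hs ?_
    have : Ioo a t ∈ 𝓝[<] t := Ioo_mem_nhdsLT hta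
    filter_upwards [this] with s hs
    have hle : Q (s, y) ≤ Q (t, y) := hmax (show (s, y) ∈ _ from ⟨⟨hs.1.le, hs.2.le.trans ht.2⟩, hy⟩)
    rw [slope_def_field]
    exact div_nonneg_of_nonpos (by linarith) (by linarith [hs.2])
  have h1 : 1 ≤ (t - a) * deriv (fun s => L s y) t := by
    have := hPt t htc y hy
    linarith
  obtain ⟨hyb, hlt⟩ := h7 t htc y h1
  -- spatial Laplacian at the maximum
  have c1 : ContDiffAt ℝ 2 (fun w => (t - a) * L t w) y :=
    contDiffAt_const.mul (hslice hLs t htc).contDiffAt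
  have c2 : ContDiffAt ℝ 2 (pot R (W t)) y :=
    (contDiff_pot R (hslice hWs t htc) (hWcs t (hIoo t htc))).contDiffAt
  have hloc : IsLocalMax (fun w => ((t - a) * L t w + pot R (W t) w) - pot R (W a) w) y := by
    filter_upwards [isOpen_ball.mem_nhds hyb] with w hw
    have : Q (t, w) ≤ Q (t, y) := hmax (show (t, w) ∈ _ from ⟨ht, ball_subset_closedBall hw⟩)
    simp only [hQ] at this
    linarith
  have hlap := lap_nonpos_of_isLocalMax ((c1.add c2).sub hpa.contDiffAt) hloc
  rw [lap_sub (c1.add c2) hpa.contDiffAt, lap_add c1 c2, lap_const_mul _ (hslice hLs t htc).contDiffAt,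
    lap_pot R (hslice hWs t htc) (hWcs t (hIoo t htc)), lap_pot R hWa (hWcs a hac)] at hlap
  have := hW0 a hac y
  linarith


/-- The cut-off profile. -/
noncomputable def lam (v : ℝ) : ℝ := Real.smoothTransition v

noncomputable def Lam (v : ℝ) : ℝ := ∫ s in (0:ℝ)..v, lam s

noncomputable def Ome (v : ℝ) : ℝ := ∫ s in (0:ℝ)..v, Real.exp s * lam s

lemma contDiff_lam : ContDiff ℝ 2 lam := Real.smoothTransition.contDiff
lemma continuous_lam : Continuous lam := contDiff_lam.continuous
lemma lam_nonneg (v : ℝ) : 0 ≤ lam v := Real.smoothTransition.nonneg v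
lemma lam_le_one (v : ℝ) : lam v ≤ 1 := Real.smoothTransition.le_one v
lemma lam_mono : Monotone lam := Real.smoothTransition.monotone
lemma lam_zero {v : ℝ} (h : v ≤ 0) : lam v = 0 := Real.smoothTransition.zero_of_nonpos h
lemma lam_one {v : ℝ} (h : 1 ≤ v) : lam v = 1 := Real.smoothTransition.one_of_one_le h

lemma hasDerivAt_Lam (v : ℝ) : HasDerivAt Lam (lam v) v :=
  (continuous_lam.integral_hasStrictDerivAt 0 v).hasDerivAt

lemma hasDerivAt_Ome (v : ℝ) : HasDerivAt Ome (Real.exp v * lam v) v :=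
  ((Real.continuous_exp.mul continuous_lam).integral_hasStrictDerivAt 0 v).hasDerivAt

lemma contDiff_Lam : ContDiff ℝ 2 Lam := by
  rw [show (2 : WithTop ℕ∞) = 1 + 1 by norm_num, contDiff_succ_iff_deriv]
  refine ⟨fun v => (hasDerivAt_Lam v).differentiableAt, by simp, ?_⟩
  rw [show deriv Lam = lam from funext fun v => (hasDerivAt_Lam v).deriv]
  exact contDiff_lam.of_le (by norm_num)

lemma contDiff_Ome : ContDiff ℝ 2 Ome := by
  rw [show (2 : WithTop ℕ∞) = 1 + 1 by norm_num, contDiff_succ_iff_deriv]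
  refine ⟨fun v => (hasDerivAt_Ome v).differentiableAt, by simp, ?_⟩
  rw [show deriv Ome = fun v => Real.exp v * lam v from funext fun v => (hasDerivAt_Ome v).deriv]
  exact Real.contDiff_exp.mul (contDiff_lam.of_le (by norm_num))

lemma Lam_zero {v : ℝ} (h : v ≤ 0) : Lam v = 0 := by
  unfold Lam
  rw [intervalIntegral.integral_congr (g := fun _ => (0:ℝ))]
  · simp
  · intro s hs
    rw [uIcc_of_ge h] at hs
    exact lam_zero hs.2

lemma Ome_zero {v : ℝ} (h : v ≤ 0) : Ome v = 0 := by
  unfold Ome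
  rw [intervalIntegral.integral_congr (g := fun _ => (0:ℝ))]
  · simp
  · intro s hs
    rw [uIcc_of_ge h] at hs
    simp [lam_zero hs.2]

lemma Lam_nonneg (v : ℝ) : 0 ≤ Lam v := by
  rcases le_total v 0 with h | h
  · rw [Lam_zero h]
  · exact intervalIntegral.integral_nonneg h fun s _ => lam_nonneg s

lemma Ome_nonneg (v : ℝ) : 0 ≤ Ome v := by
  rcases le_total v 0 with h | h
  · rw [Ome_zero h]
  · exact intervalIntegral.integral_nonneg h fun s _ => mul_nonneg (Real.exp_pos s).le (lam_nonneg s)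

lemma Lam_ge (v : ℝ) : v - 1 ≤ Lam v := by
  rcases le_total v 1 with h | h
  · linarith [Lam_nonneg v]
  · have hii : ∀ a b : ℝ, IntervalIntegrable lam volume a b := fun a b =>
      continuous_lam.intervalIntegrable a b
    have h1 : Lam v = (∫ s in (0:ℝ)..1, lam s) + ∫ s in (1:ℝ)..v, lam s :=
      (intervalIntegral.integral_add_adjacent_intervals (hii 0 1) (hii 1 v)).symm
    have h2 : (∫ s in (1:ℝ)..v, lam s) = v - 1 := by
      rw [intervalIntegral.integral_congr (g := fun _ => (1:ℝ))]
      · simp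
      · intro s hs
        rw [uIcc_of_le h] at hs
        exact lam_one hs.1
    have h3 : 0 ≤ ∫ s in (0:ℝ)..1, lam s := Lam_nonneg 1
    linarith

lemma Ome_le {v : ℝ} (h : 0 ≤ v) : Ome v ≤ (Real.exp v - 1) * lam v := by
  have h1 : Ome v ≤ ∫ s in (0:ℝ)..v, Real.exp s * lam v := by
    refine intervalIntegral.integral_mono_on h
      ((Real.continuous_exp.mul continuous_lam).intervalIntegrable _ _)
      ((Real.continuous_exp.mul continuous_const).intervalIntegrable _ _) fun s hs => ?_
    exact mul_le_mul_of_nonneg_left (lam_mono hs.2) (Real.exp_pos s).le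
  rw [intervalIntegral.integral_mul_const, integral_exp] at h1
  simpa using h1

lemma Ome_le' (v : ℝ) : Ome v ≤ (Real.exp v - 1) * lam v := by
  rcases le_total v 0 with h | h
  · rw [Ome_zero h, lam_zero h]; simp
  · exact Ome_le h

lemma Ome_le_max (v : ℝ) : Ome v ≤ max (Real.exp v - 1) 0 := by
  rcases le_total v 0 with h | h
  · rw [Ome_zero h]; exact le_max_right _ _
  · refine (Ome_le h).trans ((mul_le_of_le_one_right ?_ (lam_le_one v)).trans (le_max_left _ _))
    linarith [Real.add_one_le_exp v]

lemma deriv_lam_nonneg (v : ℝ) : 0 ≤ deriv lam v := lam_mono.deriv_nonneg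

/-- Conformal factor of the hyperbolic metric on the disc of radius `R`. -/
noncomputable def HH (R : ℝ) (x0 x : E2) : ℝ := 4 * R^2 / (R^2 - ‖x - x0‖^2)^2

lemma HH_aux {R : ℝ} {x0 x : E2} (hx : x ∈ ball x0 R) : 0 < R^2 - ‖x - x0‖^2 := by
  rw [mem_ball, dist_eq_norm] at hx
  nlinarith [norm_nonneg (x - x0)]

lemma HH_pos {R : ℝ} (hR : 0 < R) {x0 x : E2} (hx : x ∈ ball x0 R) : 0 < HH R x0 x := by
  have := HH_aux hx
  unfold HH; positivity

lemma contDiffOn_HH (R : ℝ) (x0 : E2) : ContDiffOn ℝ 2 (HH R x0) (ball x0 R) := by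
  unfold HH
  refine contDiffOn_const.div ((contDiffOn_const.sub (contDiff_normsq x0).contDiffOn).pow 2) ?_
  intro x hx
  have := HH_aux hx
  positivity

lemma log_HH {R : ℝ} (hR : 0 < R) {x0 x : E2} (hx : x ∈ ball x0 R) :
    log (HH R x0 x) = log (4 * R^2) - 2 * log (R^2 - ‖x - x0‖^2) := by
  have := HH_aux hx
  unfold HH
  rw [log_div (by positivity) (by positivity), Real.log_pow]
  norm_num

lemma lap_log_HH {R : ℝ} (hR : 0 < R) {x0 x : E2} (hx : x ∈ ball x0 R) :
    lap (fun y => log (HH R x0 y)) x = 2 * HH R x0 x := by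
  have hp := HH_aux hx
  have h0 : (fun y => log (HH R x0 y)) =ᶠ[𝓝 x]
      fun y => (fun s => log (4 * R^2) - 2 * log (R^2 - s)) (‖y - x0‖^2) := by
    filter_upwards [isOpen_ball.mem_nhds hx] with y hy using log_HH hR hy
  rw [lap_congr h0]
  have hd : ∀ s, R^2 - s ≠ 0 → HasDerivAt (fun s => log (4 * R^2) - 2 * log (R^2 - s))
      (2 / (R^2 - s)) s := by
    intro s hs
    have h1 : HasDerivAt (fun s => R^2 - s) (-1) s := by
      simpa using (hasDerivAt_id s).const_sub (R^2)
    have := ((h1.log hs).const_mul 2).const_sub (log (4 * R^2))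
    refine this.congr_deriv ?_
    ring
  have h2 : HasDerivAt (fun s => 2 / (R^2 - s)) (2 / (R^2 - ‖x - x0‖^2)^2) (‖x - x0‖^2) := by
    have h1 : HasDerivAt (fun s => R^2 - s) (-1) (‖x - x0‖^2) := by
      simpa using (hasDerivAt_id (‖x - x0‖^2)).const_sub (R^2)
    have := (hasDerivAt_const (‖x - x0‖^2) (2:ℝ)).div h1 hp.ne'
    refine this.congr_deriv ?_
    ring
  have hev : ∀ᶠ s in 𝓝 (‖x - x0‖^2), R^2 - s ≠ 0 := by
    have : ContinuousAt (fun s => R^2 - s) (‖x - x0‖^2) := by fun_prop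
    exact this.eventually_ne hp.ne'
  have hcd : ContDiffAt ℝ 2 (fun s => log (4 * R^2) - 2 * log (R^2 - s)) (‖x - x0‖^2) := by
    refine contDiffAt_const.sub (contDiffAt_const.mul ?_)
    exact (contDiffAt_const.sub contDiffAt_id).log hp.ne'
  rw [lap_comp (contDiff_normsq x0).contDiffAt hcd (hev.mono hd) h2, lap_normsq, sum_fderiv_normsq]
  unfold HH
  field_simp
  ring

/-- Extension by zero preserves smoothness. -/
lemma contDiffOn_ext_zero {n : WithTop ℕ∞} {S : Set ℝ} {x0 : E2} {R R' : ℝ} (hR' : R' < R)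
    {Φ : ℝ → E2 → ℝ} (hΦ : ContDiffOn ℝ n (fun p : ℝ × E2 => Φ p.1 p.2) (S ×ˢ ball x0 R))
    (h0 : ∀ t ∈ S, ∀ x ∈ ball x0 R, R' ≤ ‖x - x0‖ → Φ t x = 0) {F : ℝ → E2 → ℝ}
    (hF1 : ∀ t, ∀ x ∈ ball x0 R, F t x = Φ t x) (hF2 : ∀ t, ∀ x ∉ ball x0 R, F t x = 0) :
    ContDiffOn ℝ n (fun p : ℝ × E2 => F p.1 p.2) (S ×ˢ univ) := by
  rintro ⟨t, x⟩ ⟨ht, -⟩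
  by_cases hx : x ∈ ball x0 R
  · have h1 : ContDiffWithinAt ℝ n (fun p : ℝ × E2 => F p.1 p.2) (S ×ˢ ball x0 R) (t, x) :=
      (hΦ (t, x) ⟨ht, hx⟩).congr (fun p hp => hF1 _ _ hp.2) (hF1 _ _ hx)
    refine h1.mono_of_mem_nhdsWithin ?_
    have : (univ : Set ℝ) ×ˢ ball x0 R ∈ 𝓝 (t, x) :=
      (isOpen_univ.prod isOpen_ball).mem_nhds ⟨mem_univ _, hx⟩
    filter_upwards [self_mem_nhdsWithin, mem_nhdsWithin_of_mem_nhds this] with p hp hq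
    exact ⟨hp.1, hq.2⟩
  · have hz : ∀ s ∈ S, ∀ y ∉ closedBall x0 R', F s y = 0 := by
      intro s hs y hy
      by_cases hyb : y ∈ ball x0 R
      · rw [hF1 _ _ hyb]
        refine h0 s hs y hyb ?_
        rw [mem_closedBall, dist_eq_norm, not_le] at hy
        exact hy.le
      · exact hF2 _ _ hyb
    have hxc : x ∉ closedBall x0 R' := fun h => hx (closedBall_subset_ball hR' h)
    have h1 : ContDiffWithinAt ℝ n (fun p : ℝ × E2 => F p.1 p.2) (S ×ˢ (closedBall x0 R')ᶜ) (t, x) :=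
      (contDiffWithinAt_const (c := (0:ℝ))).congr (fun p hp => hz _ hp.1 _ hp.2) (hz _ ht _ hxc)
    refine h1.mono_of_mem_nhdsWithin ?_
    have : (univ : Set ℝ) ×ˢ (closedBall x0 R')ᶜ ∈ 𝓝 (t, x) :=
      (isOpen_univ.prod isClosed_closedBall.isOpen_compl).mem_nhds ⟨mem_univ _, hxc⟩
    filter_upwards [self_mem_nhdsWithin, mem_nhdsWithin_of_mem_nhds this] with p hp hq
    exact ⟨hp.1, hq.2⟩


lemma exists_barrier_radius {R M α : ℝ} (hR : 0 < R) (hα : 0 < α) :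
    ∃ R' < R, ∀ ρ, R' ≤ ρ → ρ < R → M * (R^2 - ρ^2)^2 < 4 * R^2 * α := by
  have hc : ContinuousAt (fun ρ : ℝ => M * (R^2 - ρ^2)^2) R := by fun_prop
  have h1 : ∀ᶠ ρ in 𝓝 R, M * (R^2 - ρ^2)^2 < 4 * R^2 * α := by
    refine hc.eventually_lt continuousAt_const ?_
    simp; positivity
  obtain ⟨l, r, hlr, hs⟩ := mem_nhds_iff_exists_Ioo_subset.1 h1
  refine ⟨(l + R) / 2, by linarith [hlr.1], fun ρ h2 h3 => hs ⟨?_, ?_⟩⟩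
  · linarith [hlr.1]
  · linarith [hlr.2]

lemma stage {T : ℝ} {u : E2 → ℝ → ℝ}
    (hu : ContDiffOn ℝ (⊤ : ℕ∞) (fun p : E2 × ℝ => u p.1 p.2) (ball 0 1 ×ˢ Ico 0 T))
    (hpos : ∀ x ∈ ball (0 : E2) 1, ∀ t ∈ Ico (0:ℝ) T, 0 < u x t)
    (hpde : ∀ x ∈ ball (0 : E2) 1, ∀ t ∈ Ico (0:ℝ) T,
        deriv (fun s => u x s) t = lap (fun y => log (u y t)) x)
    {x0 : E2} {R a b α : ℝ} (hR : 0 < R) (hball : closedBall x0 R ⊆ ball 0 1)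
    (ha : 0 ≤ a) (hab : a < b) (hbT : b < T) (hα : 0 < α) :
    ∃ w : E2 → ℝ, Continuous w ∧ HasCompactSupport w ∧ (∀ y, 0 ≤ w y) ∧
      (∀ y, y ∉ ball x0 R → w y = 0) ∧
      (∀ y ∈ ball x0 R, w y ≤ max (u y a - α * HH R x0 y) 0) ∧
      ∀ x ∈ ball x0 R, log (u x b) ≤
        log ((α + 2 * (b - a)) * HH R x0 x) + pot R w x / (b - a) + 2 := by
  obtain ⟨c, hbc, hcT⟩ := exists_between hbT
  have hbb : ball x0 R ⊆ ball 0 1 := ball_subset_closedBall.trans hball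
  have hS : Ico a c ⊆ Ico 0 T := fun t ht => ⟨ha.trans ht.1, ht.2.trans hcT⟩
  -- upper bound
  obtain ⟨M, hM⟩ : ∃ M, ∀ x ∈ closedBall x0 R, ∀ t ∈ Icc a c, u x t ≤ M := by
    have hK : IsCompact (closedBall x0 R ×ˢ Icc a c) := (isCompact_closedBall x0 R).prod isCompact_Icc
    have hc : ContinuousOn (fun p : E2 × ℝ => u p.1 p.2) (closedBall x0 R ×ˢ Icc a c) :=
      hu.continuousOn.mono (prod_mono hball fun t ht => ⟨ha.trans ht.1, ht.2.trans_lt hcT⟩)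
    obtain ⟨M, hM⟩ := (hK.image_of_continuousOn hc).bddAbove
    exact ⟨M, fun x hx t ht => hM ⟨(x, t), ⟨hx, ht⟩, rfl⟩⟩
  obtain ⟨R', hR', hbar⟩ := exists_barrier_radius (M := M) hR hα
  have hβ : ∀ t, a ≤ t → 0 < α + 2 * (t - a) := fun t ht => by linarith
  set v : ℝ → E2 → ℝ := fun t x => log (u x t) - log (α + 2 * (t - a)) - log (HH R x0 x) with hv
  have hexpv : ∀ t ∈ Ico a c, ∀ x ∈ ball x0 R,
      (α + 2 * (t - a)) * HH R x0 x * Real.exp (v t x) = u x t := by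
    intro t ht x hx
    have h1 := hβ t ht.1
    have h2 := HH_pos hR hx
    have h3 := hpos x (hbb hx) t (hS ht)
    simp only [hv]
    rw [Real.exp_sub, Real.exp_sub, exp_log h1, exp_log h2, exp_log h3]
    field_simp
  have hvneg : ∀ t ∈ Ico a c, ∀ x ∈ ball x0 R, R' ≤ ‖x - x0‖ → v t x ≤ 0 := by
    intro t ht x hx hx'
    have h2 := HH_pos hR hx
    have h3 := hpos x (hbb hx) t (hS ht)
    have h4 := hM x (ball_subset_closedBall hx) t ⟨ht.1, ht.2.le⟩
    have h5 := hbar ‖x - x0‖ hx' (by simpa [dist_eq_norm] using hx)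
    have h6 := HH_aux hx
    have h7 : M ≤ α * HH R x0 x := by
      unfold HH
      rw [← mul_div_assoc, le_div_iff₀ (by positivity)]
      linarith
    have h8 : u x t ≤ (α + 2 * (t - a)) * HH R x0 x := by
      have : 0 ≤ 2 * (t - a) * HH R x0 x := by
        have := ht.1
        exact mul_nonneg (by linarith) h2.le
      linarith
    have := Real.log_le_log h3 h8
    rw [Real.log_mul (hβ t ht.1).ne' h2.ne'] at this
    simp only [hv]; linarith
  -- smoothness
  have hu2 : ContDiffOn ℝ 2 (fun p : ℝ × E2 => u p.2 p.1) (Ico a c ×ˢ ball x0 R) := by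
    have h1 : ContDiffOn ℝ 2 (fun p : E2 × ℝ => u p.1 p.2) (ball 0 1 ×ˢ Ico 0 T) :=
      hu.of_le (WithTop.coe_le_coe.2 (le_top : (2:ℕ∞) ≤ ⊤))
    exact h1.comp (f := fun p : ℝ × E2 => (p.2, p.1)) (by fun_prop) fun p hp => ⟨hbb hp.2, hS hp.1⟩
  have hHs : ContDiffOn ℝ 2 (fun p : ℝ × E2 => HH R x0 p.2) (Ico a c ×ˢ ball x0 R) :=
    (contDiffOn_HH R x0).comp (f := fun p : ℝ × E2 => p.2) (by fun_prop) fun p hp => hp.2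
  have hβs : ContDiffOn ℝ 2 (fun p : ℝ × E2 => α + 2 * (p.1 - a)) (Ico a c ×ˢ ball x0 R) := by
    fun_prop
  have hvs : ContDiffOn ℝ 2 (fun p : ℝ × E2 => v p.1 p.2) (Ico a c ×ˢ ball x0 R) := by
    refine ((hu2.log ?_).sub (hβs.log ?_)).sub (hHs.log ?_)
    · exact fun p hp => (hpos _ (hbb hp.2) _ (hS hp.1)).ne'
    · exact fun p hp => (hβ _ hp.1.1).ne'
    · exact fun p hp => (HH_pos hR hp.2).ne'
  classical
  set L : ℝ → E2 → ℝ := fun t x => if x ∈ ball x0 R then Lam (v t x) else 0 with hL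
  set W : ℝ → E2 → ℝ := fun t x =>
    if x ∈ ball x0 R then (α + 2 * (t - a)) * HH R x0 x * Ome (v t x) else 0 with hW
  have L1 : ∀ t, ∀ x ∈ ball x0 R, L t x = Lam (v t x) := fun t x hx => if_pos hx
  have L2 : ∀ t, ∀ x, x ∉ ball x0 R → L t x = 0 := fun t x hx => if_neg hx
  have W1 : ∀ t, ∀ x ∈ ball x0 R, W t x = (α + 2 * (t - a)) * HH R x0 x * Ome (v t x) :=
    fun t x hx => if_pos hx
  have W2 : ∀ t, ∀ x, x ∉ ball x0 R → W t x = 0 := fun t x hx => if_neg hx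
  have hLs : ContDiffOn ℝ 2 (fun p : ℝ × E2 => L p.1 p.2) (Ico a c ×ˢ univ) := by
    refine contDiffOn_ext_zero (Φ := fun t x => Lam (v t x)) hR' ?_ ?_ L1 L2
    · exact contDiff_Lam.comp_contDiffOn hvs
    · exact fun t ht x hx h => Lam_zero (hvneg t ht x hx h)
  have hWs : ContDiffOn ℝ 2 (fun p : ℝ × E2 => W p.1 p.2) (Ico a c ×ˢ univ) := by
    refine contDiffOn_ext_zero
      (Φ := fun t x => (α + 2 * (t - a)) * HH R x0 x * Ome (v t x)) hR' ?_ ?_ W1 W2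
    · exact (hβs.mul hHs).mul (contDiff_Ome.comp_contDiffOn hvs)
    · intro t ht x hx h
      rw [Ome_zero (hvneg t ht x hx h), mul_zero]
  have hac : a ∈ Ico a c := ⟨le_rfl, hab.trans hbc⟩
  have hslice : ∀ {F : ℝ → E2 → ℝ}, ContDiffOn ℝ 2 (fun p : ℝ × E2 => F p.1 p.2) (Ico a c ×ˢ univ) →
      ∀ t ∈ Ico a c, ContDiff ℝ 2 (F t) := by
    intro F hF t ht
    have := hF.comp (t := Ico a c ×ˢ univ) (s := univ) (f := fun y : E2 => (t, y))
      (by fun_prop) (fun y _ => by simpa using ht)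
    rw [← contDiffOn_univ]
    exact this
  have hW0 : ∀ t ∈ Ico a c, ∀ x, 0 ≤ W t x := by
    intro t ht x
    by_cases hx : x ∈ ball x0 R
    · rw [W1 t x hx]
      exact mul_nonneg (mul_pos (hβ t ht.1) (HH_pos hR hx)).le (Ome_nonneg _)
    · rw [W2 t x hx]
  have hIoo : Ioo a c ⊆ Ico a c := Ioo_subset_Ico_self
  have hIcc : Icc a b ⊆ Ico a c := fun t ht => ⟨ht.1, ht.2.trans_lt hbc⟩
  have hncb : ∀ x, x ∉ closedBall x0 R → x ∉ ball x0 R := fun x hx h => hx (ball_subset_closedBall h)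
  have hout : ∀ t ∈ Ioo a c, ∀ x, x ∉ ball x0 R → deriv (fun s => W s x) t = 0 ∧
      deriv (fun s => L s x) t = 0 ∧ lap (L t) x = 0 := by
    intro t ht x hx
    refine ⟨?_, ?_, ?_⟩
    · rw [show (fun s => W s x) = fun _ => 0 from funext fun s => W2 s x hx]; simp
    · rw [show (fun s => L s x) = fun _ => 0 from funext fun s => L2 s x hx]; simp
    · have hxc : x ∉ closedBall x0 R' := fun h => hx (closedBall_subset_ball hR' h)
      have : L t =ᶠ[𝓝 x] fun _ => 0 := by
        filter_upwards [isClosed_closedBall.isOpen_compl.mem_nhds hxc] with y hy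
        by_cases hyb : y ∈ ball x0 R
        · rw [L1 t y hyb]
          refine Lam_zero (hvneg t (hIoo ht) y hyb ?_)
          rw [mem_compl_iff, mem_closedBall, dist_eq_norm, not_le] at hy
          exact hy.le
        · exact L2 t y hyb
      rw [lap_congr this, lap_const]
  -- pointwise computations inside the ball
  have hin : ∀ t ∈ Ioo a c, ∀ x ∈ ball x0 R, ∃ vt ut : ℝ,
      deriv (fun s => L s x) t = lam (v t x) * vt ∧
      u x t * vt = ut - 2 * HH R x0 x * Real.exp (v t x) ∧
      deriv (fun s => W s x) t = 2 * HH R x0 x * Ome (v t x) + u x t * lam (v t x) * vt ∧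
      lam (v t x) * (ut - 2 * HH R x0 x) ≤ lap (L t) x := by
    intro t ht x hx
    have hxB := hbb hx
    have htT := hS (hIoo ht)
    have hβt := hβ t ht.1.le
    have hup := hpos x hxB t htT
    have hHp := HH_pos hR hx
    have hud : HasDerivAt (fun s => u x s) (deriv (fun s => u x s) t) t := by
      have hn : ball (0:E2) 1 ×ˢ Ico 0 T ∈ 𝓝 (x, t) := by
        refine prod_mem_nhds (isOpen_ball.mem_nhds hxB) (Ico_mem_nhds ?_ htT.2)
        exact ha.trans_lt ht.1
      have h1 : DifferentiableAt ℝ (fun p : E2 × ℝ => u p.1 p.2) (x, t) :=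
        (hu.contDiffAt hn).differentiableAt (by simp)
      exact (h1.comp t (f := fun s : ℝ => (x, s)) (by fun_prop)).hasDerivAt
    set ut := deriv (fun s => u x s) t with hut
    have hβd : HasDerivAt (fun s => α + 2 * (s - a)) 2 t := by
      simpa using (((hasDerivAt_id t).sub_const a).const_mul 2).const_add α
    have hvd : HasDerivAt (fun s => v s x) (ut / u x t - 2 / (α + 2 * (t - a))) t := by
      have := ((hud.log hup.ne').sub (hβd.log hβt.ne')).sub_const (log (HH R x0 x))
      exact this
    refine ⟨ut / u x t - 2 / (α + 2 * (t - a)), ut, ?_, ?_, ?_, ?_⟩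
    · rw [show (fun s => L s x) = fun s => Lam (v s x) from funext fun s => L1 s x hx]
      exact ((hasDerivAt_Lam (v t x)).comp t hvd).deriv
    · rw [← hexpv t (hIoo ht) x hx]
      have := Real.exp_pos (v t x)
      field_simp
    · rw [show (fun s => W s x) = fun s => (α + 2 * (s - a)) * HH R x0 x * Ome (v s x) from
        funext fun s => W1 s x hx]
      have h1 := (hβd.mul_const (HH R x0 x)).mul ((hasDerivAt_Ome (v t x)).comp t hvd)
      have h2 := h1.deriv
      refine Eq.trans h2 ?_
      simp only [Function.comp]
      rw [← hexpv t (hIoo ht) x hx]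
      ring
    · have e1 : L t =ᶠ[𝓝 x] fun y => Lam (v t y) := by
        filter_upwards [isOpen_ball.mem_nhds hx] with y hy using L1 t y hy
      have cu : ContDiffAt ℝ 2 (fun y => u y t) x := by
        have := hu2.comp (t := Ico a c ×ˢ ball x0 R) (s := ball x0 R) (f := fun y : E2 => (t, y))
          (by fun_prop) (fun y hy => ⟨hIoo ht, hy⟩)
        exact this.contDiffAt (isOpen_ball.mem_nhds hx)
      have cH : ContDiffAt ℝ 2 (HH R x0) x := (contDiffOn_HH R x0).contDiffAt (isOpen_ball.mem_nhds hx)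
      have clu : ContDiffAt ℝ 2 (fun y => log (u y t)) x := cu.log hup.ne'
      have clH : ContDiffAt ℝ 2 (fun y => log (HH R x0 y)) x := cH.log hHp.ne'
      have cc : ContDiffAt ℝ 2 (fun _ : E2 => log (α + 2 * (t - a))) x := contDiffAt_const
      have lv : lap (v t) x = ut - 2 * HH R x0 x := by
        have : lap (v t) x = lap (fun y => log (u y t)) x - lap (fun _ => log (α + 2 * (t - a))) x
            - lap (fun y => log (HH R x0 y)) x := by
          rw [← lap_sub clu cc, ← lap_sub (clu.sub cc) clH]
        rw [this, lap_const, lap_log_HH hR hx, ← hpde x hxB t htT]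
        ring
      rw [lap_congr e1, lap_comp (dphi := lam) (ddphi := deriv lam (v t x)) ((clu.sub cc).sub clH)
        contDiff_Lam.contDiffAt
        (Eventually.of_forall hasDerivAt_Lam)
        ((contDiff_lam.differentiable (by norm_num)) _).hasDerivAt, lv]
      have : 0 ≤ deriv lam (v t x) * ∑ i, (fderiv ℝ (v t) x (ee i))^2 :=
        mul_nonneg (deriv_lam_nonneg _) (Finset.sum_nonneg fun i _ => sq_nonneg _)
      linarith
  have hmain := fun (x : E2) (hx : x ∈ closedBall x0 R) =>
    maxPrinciple (L := L) (W := W) (R := R) (x0 := x0) hab hbc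
    (hLs.mono (prod_mono_left hIoo)) (hWs.mono (prod_mono_left hIoo))
    (hLs.continuousOn.mono (prod_mono_left hIcc)) (hWs.continuousOn.mono (prod_mono_left hIcc))
    (hslice hWs a hac)
    (fun t _ x hx => L2 t x (hncb x hx)) (fun t _ x hx => W2 t x (hncb x hx)) hW0
    (by
      intro t ht x
      by_cases hx : x ∈ ball x0 R
      · obtain ⟨vt, ut, -, h2, h3, h4⟩ := hin t ht x hx
        refine le_trans ?_ h4
        rw [h3]
        have h6 := Ome_le' (v t x)
        have h7 := HH_pos hR hx
        have h8 : u x t * lam (v t x) * vt =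
          lam (v t x) * (ut - 2 * HH R x0 x * Real.exp (v t x)) := by rw [← h2]; ring
        rw [h8]
        have := mul_le_mul_of_nonneg_left h6 h7.le
        linarith
      · obtain ⟨h1, -, h3⟩ := hout t ht x hx
        rw [h1, h3])
    (by
      intro t ht x h1
      by_cases hx : x ∈ ball x0 R
      · refine ⟨hx, ?_⟩
        obtain ⟨vt, ut, e1, h2, h3, h4⟩ := hin t ht x hx
        rw [e1] at h1
        have hta : 0 < t - a := by linarith [ht.1]
        have hup := hpos x (hbb hx) t (hS (hIoo ht))
        have hHp := HH_pos hR hx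
        have hβt := hβ t ht.1.le
        have hl0 := lam_nonneg (v t x)
        have hvpos : 0 < v t x := by
          by_contra hcon
          rw [lam_zero (not_lt.1 hcon)] at h1
          norm_num at h1
        have hex : 0 ≤ Real.exp (v t x) - 1 := by linarith [Real.add_one_le_exp (v t x)]
        have hWlt : W t x < u x t := by
          rw [W1 t x hx]
          have h9 := Ome_le_max (v t x)
          rw [max_eq_left hex] at h9
          have hp := mul_pos hβt hHp
          have := mul_le_mul_of_nonneg_left h9 hp.le
          have he := hexpv t (hIoo ht) x hx
          linarith
        refine hWlt.trans_le (le_trans ?_ (mul_le_mul_of_nonneg_left h4 hta.le))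
        have e2 : ut = u x t * vt + 2 * HH R x0 x * Real.exp (v t x) := by linarith
        rw [e2]
        have h10 := mul_le_mul_of_nonneg_left h1 hup.le
        have h11 : 0 ≤ (t - a) * (lam (v t x) * (2 * HH R x0 x * (Real.exp (v t x) - 1))) := by
          positivity
        linarith
      · obtain ⟨-, h2, -⟩ := hout t ht x hx
        rw [h2] at h1
        norm_num at h1)
    hx
  refine ⟨W a, (hslice hWs a hac).continuous,
    hasCompactSupport_of_closedBall (x0 := x0) (R := R) fun x hx => W2 a x (hncb x hx),
    hW0 a hac, W2 a, ?_, ?_⟩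
  · intro y hy
    rw [W1 a y hy]
    have hp := mul_pos (hβ a le_rfl) (HH_pos hR hy)
    have he := hexpv a hac y hy
    have h1 := mul_le_mul_of_nonneg_left (Ome_le_max (v a y)) hp.le
    refine h1.trans (le_of_eq ?_)
    rw [mul_max_of_nonneg _ _ hp.le, mul_zero, mul_sub, he]
    simp
  · intro x hx
    have h1 := hmain x (ball_subset_closedBall hx)
    have hba : 0 < b - a := by linarith
    rw [L1 b x hx] at h1
    have h2 := Lam_ge (v b x)
    have h3 : Lam (v b x) ≤ pot R (W a) x / (b - a) + 1 := by
      rw [← sub_le_iff_le_add, le_div_iff₀ hba]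
      linarith
    rw [Real.log_mul (hβ b hab.le).ne' (HH_pos hR hx).ne']
    simp only [hv] at h2 h3
    linarith


/-- Jensen's inequality for the exponential and a sub-probability density. -/
lemma jensen_exp {f G : E2 → ℝ} (hf : Integrable f) (hf0 : ∀ z, 0 ≤ f z) (hf1 : ∫ z, f z ≤ 1)
    (h1 : Integrable (fun z => G z * f z)) (h2 : Integrable (fun z => Real.exp (G z) * f z)) :
    Real.exp (∫ z, G z * f z) ≤ 1 + ∫ z, Real.exp (G z) * f z := by
  set A := ∫ z, G z * f z with hA
  set m := ∫ z, f z with hm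
  have hm0 : 0 ≤ m := integral_nonneg hf0
  have key : Real.exp A * (m * (1 - A) + A) ≤ ∫ z, Real.exp (G z) * f z := by
    have e : Real.exp A * (m * (1 - A) + A) = ∫ z, Real.exp A * (f z * (1 - A) + G z * f z) := by
      rw [integral_const_mul, integral_add (hf.mul_const _) h1, integral_mul_const]
    rw [e]
    refine integral_mono (((hf.mul_const _).add h1).const_mul _) h2 fun z => ?_
    have h3 : Real.exp A * (1 - A + G z) ≤ Real.exp (G z) := by
      have h4 := Real.add_one_le_exp (G z - A)
      have h5 : Real.exp (G z) = Real.exp A * Real.exp (G z - A) := by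
        rw [← Real.exp_add]; ring_nf
      rw [h5]
      exact mul_le_mul_of_nonneg_left (by linarith) (Real.exp_pos A).le
    have := mul_le_mul_of_nonneg_right h3 (hf0 z)
    simp only
    linarith
  have hE := Real.exp_pos A
  rcases le_total A 1 with h | h
  · have h6 : 1 - A ≤ Real.exp (-A) := by linarith [Real.add_one_le_exp (-A)]
    have h7 := mul_le_mul_of_nonneg_left h6 hE.le
    rw [← Real.exp_add] at h7
    simp only [add_neg_cancel, Real.exp_zero] at h7
    have h8 : 0 ≤ Real.exp A * (m * (1 - A)) := by
      have : 0 ≤ 1 - A := by linarith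
      positivity
    linarith
  · have h9 : 0 ≤ (1 - m) * (A - 1) := mul_nonneg (by linarith) (by linarith)
    have h10 := mul_nonneg hE.le h9
    linarith

/-- Truncated Riesz kernel. -/
noncomputable def ks (s r : ℝ) (z : E2) : ℝ := (ball (0:E2) (2 * r)).indicator (fun z => (r / ‖z‖) ^ s) z

lemma ks_of_mem {s r : ℝ} {z : E2} (hz : ‖z‖ < 2 * r) : ks s r z = (r / ‖z‖) ^ s :=
  indicator_of_mem (by simpa using hz) _

lemma ks_nonneg {s r : ℝ} (hr : 0 < r) (z : E2) : 0 ≤ ks s r z :=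
  indicator_nonneg (fun z _ => rpow_nonneg (by positivity) _) z

lemma ks_scale {s r : ℝ} (hr : 0 < r) (z : E2) : ks s r z = ks s 1 (r⁻¹ • z) := by
  have hn : ‖r⁻¹ • z‖ = ‖z‖ / r := by
    rw [norm_smul, norm_inv, Real.norm_of_nonneg hr.le]; ring
  by_cases hz : ‖z‖ < 2 * r
  · rw [ks_of_mem hz, ks_of_mem, hn, one_div_div]
    rw [hn, div_lt_iff₀ hr]; linarith
  · unfold ks
    rw [indicator_of_notMem (by simpa using hz), indicator_of_notMem]
    rw [mem_ball_zero_iff, hn, div_lt_iff₀ hr]; linarith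

lemma integrable_ks_one {s : ℝ} (hs : s < 2) : Integrable (ks s 1) := by
  unfold ks
  rw [show (fun z : E2 => (ball (0:E2) (2 * 1)).indicator (fun z => (1 / ‖z‖) ^ s) z) =
    (ball (0:E2) (2 * 1)).indicator (fun z => (1 / ‖z‖) ^ s) from rfl,
    integrable_indicator_iff measurableSet_ball]
  refine integrableOn_ball_of_norm_le_rpow (C := 1) (α := s) (by simp) (by simpa using hs) ?_ ?_
  · refine Eventually.of_forall fun z => ?_
    rw [Real.norm_of_nonneg (rpow_nonneg (by positivity) _), one_mul, one_div,
      Real.inv_rpow (norm_nonneg z), Real.rpow_neg (norm_nonneg z)]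
  · have : Measurable (fun z : E2 => (1 / ‖z‖) ^ s) :=
      (measurable_const.div measurable_norm).pow_const s
    exact this.aestronglyMeasurable

lemma integrable_ks {s r : ℝ} (hs : s < 2) (hr : 0 < r) : Integrable (ks s r) := by
  rw [show ks s r = fun z => ks s 1 (r⁻¹ • z) from funext (ks_scale hr)]
  exact (integrable_ks_one hs).comp_smul (inv_ne_zero hr.ne')

lemma integral_ks {s r : ℝ} (hr : 0 < r) : ∫ z, ks s r z = r^2 * ∫ z, ks s 1 z := by
  rw [show (fun z => ks s r z) = fun z => ks s 1 (r⁻¹ • z) from funext (ks_scale hr),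
    Measure.integral_comp_inv_smul]
  simp

lemma integrable_ks_mul {s r : ℝ} (hs : s < 2) (hr : 0 < r) {w : E2 → ℝ} (hw : Continuous w)
    (hwc : HasCompactSupport w) (x : E2) : Integrable (fun z => ks s r z * w (x - z)) := by
  obtain ⟨C, hC⟩ := hwc.exists_bound_of_continuous hw
  exact (integrable_ks hs hr).mul_bdd (c := C)
    (hw.comp (continuous_const.sub continuous_id)).aestronglyMeasurable
    (Eventually.of_forall fun z => hC _)

lemma norm_lt_two_of_mem {R : ℝ} {x0 x z : E2} (hx : x ∈ ball x0 R)
    (hz : x - z ∈ ball x0 R) : ‖z‖ < 2 * R := by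
  rw [mem_ball, dist_eq_norm] at *
  have : z = (x - x0) - (x - z - x0) := by abel
  rw [this]
  exact (norm_sub_le _ _).trans_lt (by linarith)

lemma exp_pot_le {x0 x : E2} {r q M τ : ℝ} (hr : 0 < r) (hq : q < 2) (hM : 0 < M) (hτ : 0 < τ)
    (hqM : q = M / (2 * π * τ)) {w : E2 → ℝ} (hw : Continuous w) (hwc : HasCompactSupport w)
    (hw0 : ∀ y, 0 ≤ w y) (hws : ∀ y, y ∉ ball x0 r → w y = 0) (hwM : ∫ y, w y ≤ M)
    (hx : x ∈ ball x0 r) :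
    Real.exp (pot r w x / τ) ≤ 1 + 2 ^ q / M * ∫ z, ks q r z * w (x - z) := by
  have hπ := pi_pos
  set f : E2 → ℝ := fun z => w (x - z) / M with hf
  set G : E2 → ℝ := fun z => q * (log (2 * r) - log ‖z‖) with hG
  have hwi : Integrable w := hw.integrable_of_hasCompactSupport hwc
  have hfi : Integrable f := (hwi.comp_sub_left x).div_const M
  have e1 : (fun z => G z * f z) = fun z => (1 / τ) * (logK r z * w (x - z)) := by
    ext z; simp only [hG, hf, logK, hqM]; field_simp
  have h1 : Integrable (fun z => G z * f z) := by
    rw [e1]; exact (integrable_logK_mul r hw hwc x).const_mul _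
  have e2 : (fun z => Real.exp (G z) * f z) =ᵐ[volume]
      fun z => (2 ^ q / M) * (ks q r z * w (x - z)) := by
    filter_upwards [ae_ne_zero_E2] with z hz
    have hz0 : 0 < ‖z‖ := norm_pos_iff.2 hz
    by_cases hxz : x - z ∈ ball x0 r
    · rw [ks_of_mem (norm_lt_two_of_mem hx hxz)]
      simp only [hG, hf]
      rw [← Real.log_div (by positivity) hz0.ne', mul_comm q, ← Real.rpow_def_of_pos (by positivity),
        mul_div_assoc, Real.mul_rpow (by norm_num) (by positivity)]
      ring
    · simp [hf, hws _ hxz]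
  have h2 : Integrable (fun z => Real.exp (G z) * f z) :=
    ((integrable_ks_mul hq hr hw hwc x).const_mul _).congr e2.symm
  have hj := jensen_exp hfi (fun z => div_nonneg (hw0 _) hM.le) (by
    simp only [hf]
    rw [integral_div, integral_sub_left_eq_self w volume x]
    exact (div_le_one hM).2 hwM) h1 h2
  rw [integral_congr_ae e2, integral_const_mul, e1, integral_const_mul] at hj
  refine le_trans (le_of_eq ?_) hj
  congr 1
  unfold pot
  ring

lemma rpow_mul_le_add {X Y η q : ℝ} (hX : 0 ≤ X) (hY : 0 ≤ Y) (hη : 0 ≤ η) (hq : 0 ≤ q) (hηq : 0 < q + η) :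
    X ^ η * Y ^ q ≤ X ^ (q + η) + Y ^ (q + η) := by
  rcases le_total X Y with h | h
  · calc X ^ η * Y ^ q ≤ Y ^ η * Y ^ q := by gcongr
      _ = Y ^ (q + η) := by rw [← Real.rpow_add' hY (by linarith), add_comm]
      _ ≤ _ := by linarith [rpow_nonneg hX (q + η)]
  · calc X ^ η * Y ^ q ≤ X ^ η * X ^ q := by gcongr
      _ = X ^ (q + η) := by rw [← Real.rpow_add' hX (by linarith), add_comm]
      _ ≤ _ := by linarith [rpow_nonneg hY (q + η)]

lemma logK_half_le {r η : ℝ} (hr : 0 < r) (hη : 0 < η) {y : E2} (hy0 : y ≠ 0) :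
    logK (r / 2) y ≤ 1 / (2 * π * η) * (r / ‖y‖) ^ η := by
  have hπ := pi_pos
  have h0 : 0 < ‖y‖ := norm_pos_iff.2 hy0
  have h := Real.log_le_rpow_div (x := r / ‖y‖) (by positivity) hη
  unfold logK
  rw [show 2 * (r / 2) = r by ring, ← Real.log_div hr.ne' h0.ne']
  calc (2 * π)⁻¹ * log (r / ‖y‖) ≤ (2 * π)⁻¹ * ((r / ‖y‖) ^ η / η) := by gcongr
    _ = _ := by field_simp

lemma logK_half_le_ks {r η q : ℝ} (hr : 0 < r) (hη : 0 < η) (hq : 0 ≤ q) {y : E2} (hy0 : y ≠ 0)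
    (hy : ‖y‖ < r / 2) : logK (r / 2) y ≤ 1 / (2 * π * η) * ks (q + η) r y := by
  have hπ := pi_pos
  have h0 : 0 < ‖y‖ := norm_pos_iff.2 hy0
  refine (logK_half_le hr hη hy0).trans ?_
  rw [ks_of_mem (by linarith)]
  gcongr
  · rw [le_div_iff₀ h0]; linarith
  · linarith

lemma logK_mul_ks_le {r η q : ℝ} (hr : 0 < r) (hη : 0 < η) (hq : 0 ≤ q) {y : E2} (hy0 : y ≠ 0)
    (hy : ‖y‖ < r / 2) (z : E2) :
    logK (r / 2) y * ks q r z ≤ 1 / (2 * π * η) * (ks (q + η) r y + ks (q + η) r z) := by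
  have hπ := pi_pos
  have h0 : 0 < ‖y‖ := norm_pos_iff.2 hy0
  by_cases hz : ‖z‖ < 2 * r
  · rw [ks_of_mem hz, ks_of_mem (by linarith : ‖y‖ < 2 * r), ks_of_mem hz]
    calc logK (r / 2) y * (r / ‖z‖) ^ q ≤ (1 / (2 * π * η) * (r / ‖y‖) ^ η) * (r / ‖z‖) ^ q :=
          mul_le_mul_of_nonneg_right (logK_half_le hr hη hy0) (by positivity)
      _ = 1 / (2 * π * η) * ((r / ‖y‖) ^ η * (r / ‖z‖) ^ q) := by ring
      _ ≤ _ := by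
        gcongr
        exact rpow_mul_le_add (by positivity) (by positivity) hη.le hq (by linarith)
  · have : ks q r z = 0 := indicator_of_notMem (by simpa using hz) _
    rw [this, mul_zero]
    have := ks_nonneg (s := q + η) hr y
    have := ks_nonneg (s := q + η) hr z
    positivity

lemma pot_le_of_conv {x0 : E2} {r q η M A : ℝ} (hr : 0 < r) (hq0 : 0 ≤ q) (hη : 0 < η)
    (hqη : q + η < 2) (hM : 0 < M) (hA : 0 ≤ A)
    {w : E2 → ℝ} (hw : Continuous w) (hwc : HasCompactSupport w)
    (hw0 : ∀ y, 0 ≤ w y) (hwM : ∫ y, w y ≤ M)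
    {w1 : E2 → ℝ} (hw1 : Continuous w1) (hw1c : HasCompactSupport w1)
    (hw1s : ∀ y, y ∉ ball x0 (r / 2) → w1 y = 0)
    (hw1A : ∀ y ∈ ball x0 (r / 2), w1 y ≤ A * (1 + 2 ^ q / M * ∫ z, ks q r z * w (y - z))) :
    pot (r / 2) w1 x0 ≤
      A * (1 / (2 * π * η)) * (1 + 2 * 2 ^ q) * (r ^ 2 * ∫ z, ks (q + η) 1 z) := by
  have hπ := pi_pos
  set s := q + η with hs
  set c := 1 / (2 * π * η) with hc
  have hc0 : 0 < c := by positivity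
  have hwi : Integrable w := hw.integrable_of_hasCompactSupport hwc
  set m := ∫ y, w y with hm
  have hm0 : 0 ≤ m := integral_nonneg hw0
  set V : E2 → ℝ := fun x => ∫ z, ks s r z * w (x - z) with hV
  have hVconv : V = convolution (ks s r) w (ContinuousLinearMap.mul ℝ ℝ) volume := by
    ext x; simp [hV, convolution]
  have hVi : Integrable V := by
    rw [hVconv]; exact (integrable_ks hqη hr).integrable_convolution _ hwi
  have hVint : ∫ x, V x = (∫ z, ks s r z) * m := by
    rw [hVconv, integral_convolution _ (integrable_ks hqη hr) hwi]; simp [hm]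
  have hV0 : ∀ x, 0 ≤ V x := fun x => integral_nonneg fun z => mul_nonneg (ks_nonneg hr z) (hw0 _)
  have h2q : (0:ℝ) < 2 ^ q := by positivity
  have hpt : ∀ y : E2, y ≠ 0 → logK (r / 2) y * w1 (x0 - y) ≤
      A * c * (ks s r y + 2 ^ q / M * (ks s r y * m + V (x0 - y))) := by
    intro y hy0
    have hk := ks_nonneg (s := s) hr y
    by_cases hy : x0 - y ∈ ball x0 (r / 2)
    · have hyn : ‖y‖ < r / 2 := by simpa [dist_eq_norm] using hy
      have hl0 : 0 ≤ logK (r / 2) y := logK_nonneg hy0 (by linarith)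
      have h1 : logK (r / 2) y * ∫ z, ks q r z * w (x0 - y - z) ≤ c * (ks s r y * m + V (x0 - y)) := by
        have hI1 : Integrable (fun z => ks s r y * w (x0 - y - z)) :=
          (hwi.comp_sub_left (x0 - y)).const_mul _
        have hI2 := integrable_ks_mul hqη hr hw hwc (x0 - y)
        have e : c * (ks s r y * m + V (x0 - y)) =
            ∫ z, c * (ks s r y * w (x0 - y - z) + ks s r z * w (x0 - y - z)) := by
          rw [integral_const_mul, integral_add hI1 hI2, integral_const_mul,
            integral_sub_left_eq_self w volume (x0 - y)]
        rw [e, ← integral_const_mul]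
        refine integral_mono ((integrable_ks_mul (by linarith) hr hw hwc (x0 - y)).const_mul _)
          ((hI1.add hI2).const_mul _) fun z => ?_
        have := mul_le_mul_of_nonneg_right (logK_mul_ks_le hr hη hq0 hy0 hyn z) (hw0 (x0 - y - z))
        simp only
        linarith
      have h2 := logK_half_le_ks hr hη hq0 hy0 hyn
      calc logK (r / 2) y * w1 (x0 - y)
          ≤ logK (r / 2) y * (A * (1 + 2 ^ q / M * ∫ z, ks q r z * w (x0 - y - z))) :=
            mul_le_mul_of_nonneg_left (hw1A _ hy) hl0
        _ = A * (logK (r / 2) y +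
            2 ^ q / M * (logK (r / 2) y * ∫ z, ks q r z * w (x0 - y - z))) := by ring
        _ ≤ A * (c * ks s r y + 2 ^ q / M * (c * (ks s r y * m + V (x0 - y)))) := by gcongr
        _ = _ := by ring
    · rw [hw1s _ hy, mul_zero]
      exact mul_nonneg (mul_nonneg hA hc0.le) (add_nonneg hk (mul_nonneg (div_pos h2q hM).le
        (add_nonneg (mul_nonneg hk hm0) (hV0 (x0 - y)))))
  have hI : Integrable (fun y => A * c * (ks s r y + 2 ^ q / M * (ks s r y * m + V (x0 - y)))) :=
    ((integrable_ks hqη hr).add ((((integrable_ks hqη hr).mul_const m).add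
      (hVi.comp_sub_left x0)).const_mul _)).const_mul _
  have hmono : pot (r / 2) w1 x0 ≤
      ∫ y, A * c * (ks s r y + 2 ^ q / M * (ks s r y * m + V (x0 - y))) := by
    refine integral_mono_ae (integrable_logK_mul _ hw1 hw1c x0) hI ?_
    filter_upwards [ae_ne_zero_E2] with y hy using hpt y hy
  refine hmono.trans ?_
  have hki := integrable_ks (s := s) hqη hr
  have hVs : Integrable (fun y => V (x0 - y)) := hVi.comp_sub_left x0
  have hkm : Integrable (fun y => ks s r y * m) := hki.mul_const m
  have j1 : ∫ y, (ks s r y * m + V (x0 - y)) = (∫ z, ks s r z) * m + (∫ z, ks s r z) * m := by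
    rw [integral_add hkm hVs, integral_mul_const, integral_sub_left_eq_self V volume x0, hVint]
  have hsum : Integrable (fun y => ks s r y * m + V (x0 - y)) := hkm.add hVs
  have hsum2 : Integrable (fun y => 2 ^ q / M * (ks s r y * m + V (x0 - y))) := hsum.const_mul _
  have j2 : ∫ y, (ks s r y + 2 ^ q / M * (ks s r y * m + V (x0 - y))) =
      (∫ z, ks s r z) + 2 ^ q / M * ((∫ z, ks s r z) * m + (∫ z, ks s r z) * m) := by
    rw [integral_add hki hsum2, integral_const_mul, j1]
  rw [integral_const_mul, j2, ← integral_ks hr]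
  set I := ∫ z, ks s r z with hIdef
  have hI0 : 0 ≤ I := integral_nonneg fun z => ks_nonneg hr z
  have hmM : m / M ≤ 1 := (div_le_one hM).2 hwM
  calc A * c * (I + 2 ^ q / M * (I * m + I * m)) = A * c * (I + 2 * 2 ^ q * I * (m / M)) := by
        field_simp; ring
    _ ≤ A * c * (I + 2 * 2 ^ q * I * 1) := by gcongr
    _ = _ := by ring


/-- The constant `D(δ)`. -/
noncomputable def Dconst (δ : ℝ) : ℝ :=
  22 * Real.exp 2 * (1 / (2 * π * (δ / (2 * (1 + δ))))) * (1 + 2 * 2 ^ ((2 + δ) / (1 + δ))) *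
    ∫ z, ks ((2 + δ) / (1 + δ) + δ / (2 * (1 + δ))) 1 z

lemma Dconst_nonneg {δ : ℝ} (hδ : 0 < δ) : 0 ≤ Dconst δ := by
  have hπ := pi_pos
  unfold Dconst
  refine mul_nonneg (by positivity) (integral_nonneg fun z => ks_nonneg one_pos z)

lemma HH_ge {R : ℝ} (hR : 0 < R) {x0 x : E2} (hx : x ∈ ball x0 R) : 4 / R^2 ≤ HH R x0 x := by
  have h := HH_aux hx
  have h1 : R^2 - ‖x - x0‖^2 ≤ R^2 := by nlinarith [norm_nonneg (x - x0)]
  unfold HH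
  rw [div_le_div_iff₀ (by positivity) (by positivity)]
  have : (R^2 - ‖x - x0‖^2)^2 ≤ (R^2)^2 := by gcongr
  nlinarith

lemma HH_le_half {R : ℝ} (hR : 0 < R) {x0 x : E2} (hx : x ∈ ball x0 (R / 2)) :
    HH R x0 x ≤ 64 / (9 * R^2) := by
  rw [mem_ball, dist_eq_norm] at hx
  have h1 : 3 / 4 * R^2 ≤ R^2 - ‖x - x0‖^2 := by nlinarith [norm_nonneg (x - x0)]
  have h2 : 0 < R^2 := by positivity
  unfold HH
  rw [div_le_div_iff₀ (by nlinarith) (by positivity)]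
  have : (3 / 4 * R^2)^2 ≤ (R^2 - ‖x - x0‖^2)^2 := by gcongr
  nlinarith

lemma poincareH_ge {x : E2} (hx : x ∈ ball (0:E2) 1) : 1 / (1 - ‖x‖)^2 ≤ poincareH x := by
  rw [mem_ball_zero_iff] at hx
  have h0 := norm_nonneg x
  have h1 : 0 < 1 - ‖x‖ := by linarith
  have h2 : 0 < 1 - ‖x‖^2 := by nlinarith
  unfold poincareH
  rw [div_pow, div_le_div_iff₀ (by positivity) (by positivity)]
  have : (1 - ‖x‖^2)^2 ≤ (2 * (1 - ‖x‖))^2 := by gcongr; nlinarith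
  nlinarith

lemma poincareH_le {x : E2} {d : ℝ} (hd : 0 < d) (hx : ‖x‖ ≤ 1 - d / 2) (hd1 : d ≤ 1) :
    poincareH x ≤ 16 / d^2 := by
  have h0 := norm_nonneg x
  have h2 : d / 2 ≤ 1 - ‖x‖^2 := by nlinarith
  unfold poincareH
  rw [div_pow, div_le_div_iff₀ (by nlinarith) (by positivity)]
  have : (d / 2)^2 ≤ (1 - ‖x‖^2)^2 := by gcongr
  nlinarith

lemma smoothing_pos {δ T : ℝ} (hδ : 0 < δ) {u : E2 → ℝ → ℝ} {α : ℝ} (hα : 1 ≤ α)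
    (hu : ContDiffOn ℝ (⊤ : ℕ∞) (fun p : E2 × ℝ => u p.1 p.2) (ball 0 1 ×ˢ Ico 0 T))
    (hpos : ∀ x ∈ ball (0 : E2) 1, ∀ t ∈ Ico (0:ℝ) T, 0 < u x t)
    (hpde : ∀ x ∈ ball (0 : E2) 1, ∀ t ∈ Ico (0:ℝ) T,
        deriv (fun s => u x s) t = lap (fun y => log (u y t)) x)
    (hIntg : IntegrableOn (fun x => max (u x 0 - α * poincareH x) 0) (ball (0 : E2) 1))
    {t : ℝ} (ht0 : 0 < t) (ht1 : t < 1) (htT : t < T)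
    (hmass : (1 + δ) * (∫ x in ball (0 : E2) 1, max (u x 0 - α * poincareH x) 0) / (4 * π) ≤ t)
    {x0 : E2} (hx0 : x0 ∈ ball (0 : E2) 1) :
    u x0 t ≤ 192 * Real.exp (Dconst δ * ((2 + δ) / δ) + 2) * α * poincareH x0 := by
  have hπ := pi_pos
  have hα0 : 0 < α := by linarith
  have hx0n : ‖x0‖ < 1 := by simpa using hx0
  have hn0 := norm_nonneg x0
  obtain ⟨d, hd⟩ : ∃ d, d = 1 - ‖x0‖ := ⟨_, rfl⟩
  have hd0 : 0 < d := by linarith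
  have hd1 : d ≤ 1 := by linarith
  obtain ⟨r, hrdef⟩ : ∃ r, r = d / 2 * √(t / α) := ⟨_, rfl⟩
  have hr : 0 < r := by rw [hrdef]; positivity
  have hr2 : r^2 = d^2 * t / (4 * α) := by
    rw [hrdef, mul_pow, Real.sq_sqrt (by positivity)]; field_simp; ring
  have hrd : r ≤ d / 2 := by
    rw [hrdef]
    have : √(t / α) ≤ 1 := by
      refine Real.sqrt_le_one.2 ?_; rw [div_le_one hα0]; linarith
    nlinarith
  have htr : t / r^2 = 4 * α / d^2 := by
    rw [hr2]; field_simp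
  have hnorm : ∀ y ∈ closedBall x0 r, ‖y‖ ≤ 1 - d / 2 := by
    intro y hy
    rw [mem_closedBall, dist_eq_norm] at hy
    have : ‖y‖ ≤ ‖y - x0‖ + ‖x0‖ := by simpa using norm_add_le (y - x0) x0
    linarith
  have hball : closedBall x0 r ⊆ ball 0 1 := by
    intro y hy
    have := hnorm y hy
    rw [mem_ball_zero_iff]; linarith
  have hball2 : closedBall x0 (r / 2) ⊆ ball 0 1 :=
    (closedBall_subset_closedBall (by linarith)).trans hball
  -- parameters
  obtain ⟨t1, ht1def⟩ : ∃ t1, t1 = 2 * t / (2 + δ) := ⟨_, rfl⟩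
  have ht1pos : 0 < t1 := by rw [ht1def]; positivity
  have ht1t : t1 < t := by
    rw [ht1def, div_lt_iff₀ (by positivity)]; nlinarith
  have htt1 : t - t1 = t * δ / (2 + δ) := by rw [ht1def]; field_simp; ring
  obtain ⟨q, hq⟩ : ∃ q, q = (2 + δ) / (1 + δ) := ⟨_, rfl⟩
  obtain ⟨η, hη⟩ : ∃ η, η = δ / (2 * (1 + δ)) := ⟨_, rfl⟩
  have hq0 : 0 < q := by rw [hq]; positivity
  have hη0 : 0 < η := by rw [hη]; positivity
  have hqη : q + η < 2 := by
    rw [hq, hη, div_add_div _ _ (by positivity) (by positivity), div_lt_iff₀ (by positivity)]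
    nlinarith
  obtain ⟨M, hMdef⟩ : ∃ M, M = 4 * π * t / (1 + δ) := ⟨_, rfl⟩
  have hM : 0 < M := by rw [hMdef]; positivity
  have hqM : q = M / (2 * π * t1) := by rw [hq, hMdef, ht1def]; field_simp; ring
  have hmass' : ∫ x in ball (0 : E2) 1, max (u x 0 - α * poincareH x) 0 ≤ M := by
    rw [div_le_iff₀ (by positivity)] at hmass
    rw [hMdef, le_div_iff₀ (by positivity)]
    linarith
  -- stage one
  obtain ⟨w, hw, hwc, hw0, hws, hwle, hstage⟩ :=
    stage hu hpos hpde hr hball le_rfl ht1pos (ht1t.trans htT) ht0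
  have hwM : ∫ y, w y ≤ M := by
    refine le_trans ?_ hmass'
    have e : ∫ y, w y = ∫ y in ball (0:E2) 1, w y := by
      rw [setIntegral_eq_integral_of_forall_compl_eq_zero]
      intro y hy
      exact hws y fun h => hy (hball (ball_subset_closedBall h))
    rw [e]
    refine setIntegral_mono_on (hw.integrable_of_hasCompactSupport hwc).integrableOn hIntg
      measurableSet_ball fun y hy => ?_
    by_cases hyr : y ∈ ball x0 r
    · refine (hwle y hyr).trans (max_le_max ?_ le_rfl)
      have h1 := HH_ge hr hyr
      have h2 := poincareH_le hd0 (hnorm y (ball_subset_closedBall hyr)) hd1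
      have h3 : α * poincareH y ≤ t * HH r x0 y := by
        calc α * poincareH y ≤ α * (16 / d^2) := by gcongr
          _ = 4 * (4 * α / d^2) := by ring
          _ = t * (4 / r^2) := by rw [← htr]; ring
          _ ≤ t * HH r x0 y := by gcongr
      linarith
    · rw [hws y hyr]; exact le_max_right _ _
  obtain ⟨A, hA⟩ : ∃ A, A = 22 * Real.exp 2 * (t / r^2) := ⟨_, rfl⟩
  have hA0 : 0 ≤ A := by rw [hA]; positivity
  have hbound1 : ∀ y ∈ ball x0 (r / 2),
      u y t1 ≤ A * (1 + 2 ^ q / M * ∫ z, ks q r z * w (y - z)) := by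
    intro y hy
    have hyr : y ∈ ball x0 r := ball_subset_ball (by linarith) hy
    have h1 := hstage y hyr
    have hup := hpos y (hball (ball_subset_closedBall hyr)) t1 ⟨ht1pos.le, ht1t.trans htT⟩
    have hHp := HH_pos hr hyr
    rw [sub_zero] at h1
    have h2 := exp_pot_le hr (by linarith) hM ht1pos hqM hw hwc hw0 hws hwM hyr
    have h3 := Real.exp_le_exp.2 h1
    rw [exp_log hup, Real.exp_add, Real.exp_add, exp_log (by positivity)] at h3
    have h4 : (t + 2 * t1) * HH r x0 y ≤ 22 * (t / r^2) := by
      calc (t + 2 * t1) * HH r x0 y ≤ (3 * t) * (64 / (9 * r^2)) :=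
            mul_le_mul (by linarith) (HH_le_half hr hy) hHp.le (by positivity)
        _ = 64 / 3 * (t / r^2) := by field_simp; ring
        _ ≤ 22 * (t / r^2) := by gcongr; norm_num
    calc u y t1 ≤ _ := h3
      _ ≤ 22 * (t / r^2) * (1 + 2 ^ q / M * ∫ z, ks q r z * w (y - z)) * Real.exp 2 := by gcongr
      _ = _ := by rw [hA]; ring
  -- stage two
  obtain ⟨w1, hw1, hw1c, hw10, hw1s, hw1le, hstage2⟩ :=
    stage hu hpos hpde (half_pos hr) hball2 ht1pos.le ht1t htT ht0
  have hP := pot_le_of_conv (x0 := x0) hr hq0.le hη0 hqη hM hA0 hw hwc hw0 hwM hw1 hw1c hw1s (by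
    intro y hy
    refine le_trans ?_ (hbound1 y hy)
    refine (hw1le y hy).trans (max_le ?_ ?_)
    · have := HH_pos (half_pos hr) hy
      have := mul_pos ht0 this
      linarith
    · exact (hpos y (hball2 (ball_subset_closedBall hy)) t1 ⟨ht1pos.le, ht1t.trans htT⟩).le)
  have hPD : pot (r / 2) w1 x0 ≤ Dconst δ * t := by
    refine hP.trans (le_of_eq ?_)
    unfold Dconst
    rw [← hq, ← hη, hA]
    field_simp
  have h5 := hstage2 x0 (mem_ball_self (half_pos hr))
  have hH0 : HH (r / 2) x0 x0 = 16 / r^2 := by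
    unfold HH; simp; field_simp; ring
  rw [hH0] at h5
  have h6 : pot (r / 2) w1 x0 / (t - t1) ≤ Dconst δ * ((2 + δ) / δ) := by
    rw [div_le_iff₀ (by linarith), htt1]
    refine hPD.trans (le_of_eq ?_)
    field_simp
  have hup := hpos x0 hx0 t ⟨ht0.le, htT⟩
  have h7 : log (u x0 t) ≤ log ((t + 2 * (t - t1)) * (16 / r^2)) + (Dconst δ * ((2 + δ) / δ) + 2) := by
    linarith
  have h8 := Real.exp_le_exp.2 h7
  have h9 : 0 < t + 2 * (t - t1) := by linarith
  rw [exp_log hup, Real.exp_add, exp_log (by positivity)] at h8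
  have h10 := poincareH_ge hx0
  rw [← hd] at h10
  have hE := Real.exp_pos (Dconst δ * ((2 + δ) / δ) + 2)
  calc u x0 t ≤ (t + 2 * (t - t1)) * (16 / r^2) * Real.exp (Dconst δ * ((2 + δ) / δ) + 2) := h8
    _ ≤ (3 * t) * (16 / r^2) * Real.exp (Dconst δ * ((2 + δ) / δ) + 2) := by gcongr; linarith
    _ = 48 * (t / r^2) * Real.exp (Dconst δ * ((2 + δ) / δ) + 2) := by ring
    _ = 192 * Real.exp (Dconst δ * ((2 + δ) / δ) + 2) * α * (1 / d^2) := by rw [htr]; ring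
    _ ≤ _ := by gcongr

lemma continuousOn_poincareH : ContinuousOn poincareH (ball (0:E2) 1) := by
  unfold poincareH
  refine (continuousOn_const.div (by fun_prop) ?_).pow 2
  intro x hx
  rw [mem_ball_zero_iff] at hx
  have : 0 < 1 - ‖x‖^2 := by nlinarith [norm_nonneg x]
  exact this.ne'

lemma smoothing_zero {δ T : ℝ} (hδ : 0 < δ) (hT : 0 < T) {u : E2 → ℝ → ℝ} {α : ℝ}
    (hu : ContDiffOn ℝ (⊤ : ℕ∞) (fun p : E2 × ℝ => u p.1 p.2) (ball 0 1 ×ˢ Ico 0 T))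
    (hIntg : IntegrableOn (fun x => max (u x 0 - α * poincareH x) 0) (ball (0 : E2) 1))
    (hmass : (1 + δ) * (∫ x in ball (0 : E2) 1, max (u x 0 - α * poincareH x) 0) / (4 * π) ≤ 0)
    {x0 : E2} (hx0 : x0 ∈ ball (0 : E2) 1) : u x0 0 ≤ α * poincareH x0 := by
  have hπ := pi_pos
  have h1 : ∫ x in ball (0 : E2) 1, max (u x 0 - α * poincareH x) 0 ≤ 0 := by
    rw [div_le_iff₀ (by positivity)] at hmass
    by_contra hcon
    push Not at hcon
    have : 0 < (1 + δ) * ∫ x in ball (0 : E2) 1, max (u x 0 - α * poincareH x) 0 := by positivity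
    linarith
  have h0 : ∀ x, 0 ≤ max (u x 0 - α * poincareH x) 0 := fun x => le_max_right _ _
  have h2 : ∫ x in ball (0 : E2) 1, max (u x 0 - α * poincareH x) 0 = 0 :=
    le_antisymm h1 (integral_nonneg h0)
  have h3 := (integral_eq_zero_iff_of_nonneg h0 hIntg).1 h2
  have hcu : ContinuousOn (fun x => u x 0) (ball (0:E2) 1) :=
    hu.continuousOn.comp (f := fun x : E2 => (x, (0:ℝ))) (by fun_prop) fun x hx => ⟨hx, le_rfl, hT⟩
  have hc : ContinuousOn (fun x => max (u x 0 - α * poincareH x) 0) (ball (0:E2) 1) :=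
    (hcu.sub (continuousOn_const.mul continuousOn_poincareH)).sup continuousOn_const
  have h4 := Measure.eqOn_open_of_ae_eq (g := fun _ => (0:ℝ)) h3 isOpen_ball hc continuousOn_const hx0
  have h5 : max (u x0 0 - α * poincareH x0) 0 = 0 := h4
  have := le_max_left (u x0 0 - α * poincareH x0) 0
  linarith

/-- **`L¹`–`L∞` smoothing estimate** (special case of Topping–Yin).
For every `δ > 0` there is `C = C(δ)` such that: if `u > 0` solves `∂ₜ u = Δ log u`
on `B × [0,T)`, `α ≥ 1`, and `(u₀ - α h̃)₊ ∈ L¹(B)`, then for every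
`t ∈ [0, min{1,T})` with `t ≥ (1+δ)‖(u₀ - α h̃)₊‖_{L¹(B)}/(4π)` one has
`u(t) ≤ C α h̃` throughout `B`. -/
theorem L1_Linfty_smoothing (δ : ℝ) (hδ : 0 < δ) :
    ∃ C : ℝ, ∀ (T : ℝ) (u : EuclideanSpace ℝ (Fin 2) → ℝ → ℝ) (α : ℝ),
      0 < T → 1 ≤ α →
      ContDiffOn ℝ (⊤ : ℕ∞) (fun p : EuclideanSpace ℝ (Fin 2) × ℝ => u p.1 p.2)
        (ball 0 1 ×ˢ Ico 0 T) →
      (∀ x ∈ ball (0 : EuclideanSpace ℝ (Fin 2)) 1, ∀ t ∈ Ico (0:ℝ) T, 0 < u x t) →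
      (∀ x ∈ ball (0 : EuclideanSpace ℝ (Fin 2)) 1, ∀ t ∈ Ico (0:ℝ) T,
        deriv (fun s => u x s) t = lap (fun y => log (u y t)) x) →
      IntegrableOn (fun x => max (u x 0 - α * poincareH x) 0)
        (ball (0 : EuclideanSpace ℝ (Fin 2)) 1) →
      ∀ t ∈ Ico (0:ℝ) (min 1 T),
        (1 + δ) * (∫ x in ball (0 : EuclideanSpace ℝ (Fin 2)) 1,
            max (u x 0 - α * poincareH x) 0) / (4 * π) ≤ t →
        ∀ x ∈ ball (0 : EuclideanSpace ℝ (Fin 2)) 1, u x t ≤ C * α * poincareH x := by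
  have hD := Dconst_nonneg hδ
  refine ⟨192 * Real.exp (Dconst δ * ((2 + δ) / δ) + 2), ?_⟩
  intro T u α hT hα hu hpos hpde hIntg t ht hmass x hx
  rcases ht.1.eq_or_lt with h | h
  · subst h
    have h1 := smoothing_zero hδ hT hu hIntg hmass hx
    refine h1.trans ?_
    have h2 : 0 ≤ α * poincareH x := mul_nonneg (by linarith) (sq_nonneg _)
    have h3 : 1 ≤ Real.exp (Dconst δ * ((2 + δ) / δ) + 2) := Real.one_le_exp (by positivity)
    rw [mul_assoc _ α]
    exact le_mul_of_one_le_left h2 (by linarith)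
  · exact smoothing_pos hδ hα hu hpos hpde hIntg h (ht.2.trans_le (min_le_left _ _))
      (ht.2.trans_le (min_le_right _ _)) hmass hx
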